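/- Let p > 0 and let (u,v) be a classical solution of the system (S₄) on ℝ⁴ such that u ≥ 0 on ℝ⁴, the finite total mass condition ∬_{ℝ⁴×ℝ⁴} u²(x)u²(y)/|x−y|² dx dy < ∞ holds, v(x)/|x|² → 0 as |x| → ∞, and there exist K > 0, C > 0, R > 0 with u(x) ≤ C|x|^K for all |x| ≥ R. Set α := (1/(8π²)) ∫_{ℝ⁴} P₄(y) dy. Then there exists γ ∈ ℝ such that for all x ∈ ℝ⁴: v(x) = (1/(8π²)) ∫_{ℝ⁴} P₄(y)·ln(|y|/|x−y|) dy + γ; moreover v(x)/ln|x| → −α as |x| → ∞. -/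

import Mathlib

open MeasureTheory Filter Topology
open scoped NNReal

noncomputable section

abbrev E4 := EuclideanSpace ℝ (Fin 4)

/-- The normalizing constant `C₄ = (∫_{ℝ⁴} (1 − cos(2πζ₁))/|ζ|⁵ dζ)⁻¹`. -/
def C4 : ℝ := (∫ ζ : E4, (1 - Real.cos (2 * Real.pi * ζ 0)) / ‖ζ‖ ^ 5)⁻¹

/-- The assertion `(−Δ)^{1/2} w (x) = h`, i.e. the principal-value limit exists and equals `h`. -/
def HalfLapEq4 (w : E4 → ℝ) (x : E4) (h : ℝ) : Prop :=
  Tendsto (fun ε : ℝ =>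
      C4 * ∫ y in {y : E4 | ε ≤ ‖y - x‖}, (w x - w y) / ‖x - y‖ ^ 5)
    (𝓝[>] (0 : ℝ)) (𝓝 h)

/-- The Euclidean Laplacian `Δw(x) = ∑ᵢ ∂²w/∂xᵢ²`. -/
def lap4 (w : E4 → ℝ) (x : E4) : ℝ :=
  ∑ i : Fin 4,
    fderiv ℝ (fun z => fderiv ℝ w z (EuclideanSpace.single i 1)) x (EuclideanSpace.single i 1)

/-- Local Hölder continuity of a map `g`. -/
def LocHolder4 {F : Type*} [NormedAddCommGroup F] (g : E4 → F) : Prop :=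
  ∀ x : E4, ∃ (C a : ℝ≥0) (r : ℝ), 0 < r ∧ 0 < (a : ℝ) ∧ (a : ℝ) ≤ 1 ∧
    HolderOnWith C a g (Metric.ball x r)

/-- `P₄(y) = (∫ u²(z)/|y−z|² dz) · u²(y)`. -/
def P4 (u : E4 → ℝ) (y : E4) : ℝ := (∫ z : E4, u z ^ 2 / ‖y - z‖ ^ 2) * u y ^ 2

/-- `(u,v)` is a classical solution of the system (S₄) on ℝ⁴. -/
structure IsSolution4 (p : ℝ) (u v : E4 → ℝ) : Prop where
  u_C1 : ContDiff ℝ 1 u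
  u_grad_holder : LocHolder4 (fderiv ℝ u)
  u_int : Integrable (fun x : E4 => |u x| / (1 + ‖x‖ ^ 5))
  v_C4 : ContDiff ℝ 4 v
  eq_u : ∀ x : E4, HalfLapEq4 u x (Real.exp (p * v x))
  eq_v : ∀ x : E4, lap4 (fun z => lap4 v z) x = P4 u x

/-- The finite total mass condition `∬ u²(x)u²(y)/|x−y|² dx dy < ∞`. -/
def FiniteMass4 (u : E4 → ℝ) : Prop :=
  Integrable (fun q : E4 × E4 => u q.1 ^ 2 * u q.2 ^ 2 / ‖q.1 - q.2‖ ^ 2)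

/-!
Write `P = P₄(u) = Δ²v`. The representation formula is a Liouville theorem for the difference
between `v` and the logarithmic potential of `P`, and it is proved without any regularity theory.

*Testing the equation.* `ell` is a smooth function equal to `log s` for `s ≥ 1` and to `0` for
`s ≤ 1/2`; `logc` is the rescaled version, a smooth approximation of `log ‖z‖²` that agrees with it
outside a ball of radius given by the scale. Its bilaplacian is a bump of total mass `-16π²`
concentrated in that ball. Two such approximations, at scales `ε < R`, differ by a compactly
supported function, so Green's identity applies to it and `v(x + ·)`. As `ε → 0` the `ε`-average of
`v` tends to `-16π² v(x)`, and there remains the `R`-average of `v` around `x`. In differences of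
two points the potential terms converge as `R → ∞`, because `ell(‖·‖²)` is Lipschitz. Hence
`-16π² (v(x) - v(0)) - logPot P x` is the limit of differences of `R`-averages, and this limit is
additive in `x` since second differences of the averages vanish when `v = o(‖x‖²)`
(`exists_additive_defect`).

*Asymptotics.* `u` has polynomial growth and finite mass, so `P` is integrable with polynomial
growth (`P4_growth`). The logarithmic singularity of the kernel is then only seen through the mass
of a unit ball escaping to infinity, and `logPot P x / log ‖x‖ → 2 ∫ P` (`tendsto_logPot`).

*The additive part is zero.* Touch `u ≥ 0` from below with a paraboloid of opening `u(x₀) + 1`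
centred at `x₀`. The contact point `x₁` is within distance one of `x₀`, and there
`exp(p v(x₁)) = (−Δ)^{1/2} u(x₁) ≤ C (u(x₀) + 1)` (`exists_near_le`). A nonzero additive part `A`
would make `exp(p v)` grow exponentially along a ray, with only logarithmic corrections in the
exponent, whereas the right-hand side grows polynomially (`additive_nonpos`).
-/

/-! ### The bilaplacian of radial functions -/

/-- The radial form of the Laplacian on `ℝ⁴`: if `w z = f (‖z‖ ^ 2)` then
`Δ w (z) = radLap f (‖z‖ ^ 2)`. -/
def radLap (f : ℝ → ℝ) (s : ℝ) : ℝ := 4 * s * deriv (deriv f) s + 8 * deriv f s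

lemma contDiff_deriv_infty {f : ℝ → ℝ} (hf : ContDiff ℝ (⊤ : ℕ∞) f) :
    ContDiff ℝ (⊤ : ℕ∞) (deriv f) :=
  (contDiff_infty_iff_deriv.1 hf).2

lemma differentiable_infty {f : ℝ → ℝ} (hf : ContDiff ℝ (⊤ : ℕ∞) f) : Differentiable ℝ f :=
  hf.differentiable (by simp)

lemma contDiff_radLap {f : ℝ → ℝ} (hf : ContDiff ℝ (⊤ : ℕ∞) f) :
    ContDiff ℝ (⊤ : ℕ∞) (radLap f) := by
  unfold radLap
  have h1 := contDiff_deriv_infty hf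
  have h2 := contDiff_deriv_infty h1
  fun_prop

lemma hasFDerivAt_radial {f : ℝ → ℝ} (hf : Differentiable ℝ f) (z : E4) :
    HasFDerivAt (fun z : E4 => f (‖z‖ ^ 2)) (deriv f (‖z‖ ^ 2) • (2 • innerSL ℝ z)) z := by
  have h := (hf (‖z‖ ^ 2)).hasDerivAt.comp_hasFDerivAt z (hasStrictFDerivAt_norm_sq z).hasFDerivAt
  exact h

lemma fderiv_radial_apply {f : ℝ → ℝ} (hf : Differentiable ℝ f) (z : E4) (i : Fin 4) :
    fderiv ℝ (fun z : E4 => f (‖z‖ ^ 2)) z (EuclideanSpace.single i 1)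
      = 2 * z i * deriv f (‖z‖ ^ 2) := by
  rw [(hasFDerivAt_radial hf z).fderiv]
  simp [EuclideanSpace.inner_single_right]
  ring

lemma lap4_radial {f : ℝ → ℝ} (hf : ContDiff ℝ (⊤ : ℕ∞) f) (z : E4) :
    lap4 (fun z : E4 => f (‖z‖ ^ 2)) z = radLap f (‖z‖ ^ 2) := by
  have h1 := contDiff_deriv_infty hf
  unfold lap4 radLap
  have : ∀ i : Fin 4, fderiv ℝ (fun z : E4 => fderiv ℝ (fun z : E4 => f (‖z‖ ^ 2)) z
      (EuclideanSpace.single i 1)) z (EuclideanSpace.single i 1)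
      = 2 * deriv f (‖z‖ ^ 2) + 4 * (z i) ^ 2 * deriv (deriv f) (‖z‖ ^ 2) := by
    intro i
    simp_rw [fderiv_radial_apply (differentiable_infty hf)]
    have hp : HasFDerivAt (fun z : E4 => 2 * z i) ((2 : ℝ) • (EuclideanSpace.proj i : E4 →L[ℝ] ℝ)) z :=
      (EuclideanSpace.proj i : E4 →L[ℝ] ℝ).hasFDerivAt.const_mul 2
    rw [(hp.fun_mul (hasFDerivAt_radial (differentiable_infty h1) z)).fderiv]
    simp [EuclideanSpace.inner_single_right]
    ring
  simp_rw [this]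
  rw [EuclideanSpace.norm_sq_eq]
  simp [Fin.sum_univ_four]
  ring

lemma lap4_lap4_radial {f : ℝ → ℝ} (hf : ContDiff ℝ (⊤ : ℕ∞) f) (z : E4) :
    lap4 (fun z => lap4 (fun z : E4 => f (‖z‖ ^ 2)) z) z = radLap (radLap f) (‖z‖ ^ 2) := by
  simp_rw [lap4_radial hf]
  exact lap4_radial (contDiff_radLap hf) z

lemma radLap_scale (f : ℝ → ℝ) (c a s : ℝ) :
    radLap (fun s => a + f (c * s)) s = c * radLap f (c * s) := by
  have h1 : deriv (fun s => a + f (c * s)) = fun s => c * deriv f (c * s) := by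
    ext s; rw [deriv_const_add]; simpa using deriv_comp_mul_left c f s
  have h2 : deriv (fun s => c * deriv f (c * s)) s = c * (c * deriv (deriv f) (c * s)) := by
    rw [deriv_const_mul_field]; congr 1; simpa using deriv_comp_mul_left c (deriv f) s
  unfold radLap
  rw [h1, h2]
  ring

lemma radLap_radLap_scale (f : ℝ → ℝ) (c a s : ℝ) :
    radLap (radLap (fun s => a + f (c * s))) s = c ^ 2 * radLap (radLap f) (c * s) := by
  have h : radLap (fun s => a + f (c * s)) = fun s => c * radLap f (c * s) := by
    ext s; exact radLap_scale f c a s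
  have h1 : deriv (fun s => c * radLap f (c * s)) = fun s => c * (c * deriv (radLap f) (c * s)) := by
    ext s; rw [deriv_const_mul_field]; congr 1; simpa using deriv_comp_mul_left c (radLap f) s
  have h2 : deriv (fun s => c * (c * deriv (radLap f) (c * s))) s
      = c * (c * (c * deriv (deriv (radLap f)) (c * s))) := by
    rw [deriv_const_mul_field, deriv_const_mul_field]; congr 2
    simpa using deriv_comp_mul_left c (deriv (radLap f)) s
  rw [h, radLap, h1, h2, radLap]
  ring

lemma radLap_sub {f g : ℝ → ℝ} (hf : ContDiff ℝ (⊤ : ℕ∞) f) (hg : ContDiff ℝ (⊤ : ℕ∞) g) (s : ℝ) :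
    radLap (fun s => f s - g s) s = radLap f s - radLap g s := by
  have h1 : deriv (fun s => f s - g s) = fun s => deriv f s - deriv g s := by
    ext s; exact deriv_fun_sub (differentiable_infty hf s) (differentiable_infty hg s)
  have h2 : deriv (fun s => deriv f s - deriv g s) s = deriv (deriv f) s - deriv (deriv g) s :=
    deriv_fun_sub (differentiable_infty (contDiff_deriv_infty hf) s)
      (differentiable_infty (contDiff_deriv_infty hg) s)
  rw [radLap, h1, h2, radLap, radLap]
  ring

lemma radLap_radLap_sub {f g : ℝ → ℝ} (hf : ContDiff ℝ (⊤ : ℕ∞) f) (hg : ContDiff ℝ (⊤ : ℕ∞) g)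
    (s : ℝ) : radLap (radLap (fun s => f s - g s)) s
      = radLap (radLap f) s - radLap (radLap g) s := by
  have h : radLap (fun s => f s - g s) = fun s => radLap f s - radLap g s := by
    ext s; exact radLap_sub hf hg s
  rw [h, radLap_sub (contDiff_radLap hf) (contDiff_radLap hg)]

/-! ### Green's second identity -/

lemma contDiff_partial {f : E4 → ℝ} {n : ℕ} (hf : ContDiff ℝ (n + 1 : ℕ) f) (e : E4) :
    ContDiff ℝ n (fun z => fderiv ℝ f z e) :=
  (hf.fderiv_right (m := n) (by norm_cast)).clm_apply contDiff_const

lemma contDiff_lap4 {f : E4 → ℝ} {n : ℕ} (hf : ContDiff ℝ (n + 2 : ℕ) f) :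
    ContDiff ℝ n (lap4 f) := by
  unfold lap4
  exact ContDiff.sum fun i _ => contDiff_partial (contDiff_partial (n := n + 1) hf _) _

lemma integral_partial_mul {f g : E4 → ℝ} (hf : ContDiff ℝ 1 f) (hg : ContDiff ℝ 1 g)
    (hc : HasCompactSupport f) (e : E4) :
    ∫ x, f x * fderiv ℝ g x e = - ∫ x, fderiv ℝ f x e * g x := by
  have hcf : Continuous (fun z => fderiv ℝ f z e) := (contDiff_partial (n := 0) hf e).continuous
  have hcg : Continuous (fun z => fderiv ℝ g z e) := (contDiff_partial (n := 0) hg e).continuous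
  apply integral_mul_fderiv_eq_neg_fderiv_mul_of_integrable
  · exact (hcf.mul hg.continuous).integrable_of_hasCompactSupport (hc.fderiv_apply ℝ e).mul_right
  · exact (hf.continuous.mul hcg).integrable_of_hasCompactSupport hc.mul_right
  · exact (hf.continuous.mul hg.continuous).integrable_of_hasCompactSupport hc.mul_right
  · exact fun x _ => hf.differentiable (by simp) x
  · exact fun x _ => hg.differentiable (by simp) x

lemma hasCompactSupport_lap4 {f : E4 → ℝ} (hc : HasCompactSupport f) :
    HasCompactSupport (lap4 f) := by
  refine hc.mono' ?_
  intro x hx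
  by_contra hn
  apply hx
  have h0 : f =ᶠ[𝓝 x] 0 := notMem_tsupport_iff_eventuallyEq.1 hn
  unfold lap4
  refine Finset.sum_eq_zero fun i _ => ?_
  have : (fun z => fderiv ℝ f z (EuclideanSpace.single i 1)) =ᶠ[𝓝 x] fun _ => (0 : ℝ) := by
    filter_upwards [h0.eventuallyEq_nhds] with z hz
    rw [hz.fderiv_eq]; simp
  rw [this.fderiv_eq]; simp

lemma integral_mul_lap4 {f g : E4 → ℝ} (hf : ContDiff ℝ 2 f) (hg : ContDiff ℝ 2 g)
    (hc : HasCompactSupport f) :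
    ∫ x, f x * lap4 g x = ∫ x, lap4 f x * g x := by
  have p1 : ∀ {f : E4 → ℝ}, ContDiff ℝ 2 f → ∀ e : E4, ContDiff ℝ 1 (fun z => fderiv ℝ f z e) :=
    fun h e => contDiff_partial (n := 1) h e
  have p2 : ∀ {f : E4 → ℝ}, ContDiff ℝ 2 f → ∀ e : E4,
      Continuous (fun z => fderiv ℝ (fun z => fderiv ℝ f z e) z e) :=
    fun h e => (contDiff_partial (n := 0) (p1 h e) e).continuous
  have h1 : ∀ e : E4, ∫ x, f x * fderiv ℝ (fun z => fderiv ℝ g z e) x e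
      = ∫ x, fderiv ℝ (fun z => fderiv ℝ f z e) x e * g x := by
    intro e
    rw [integral_partial_mul (hf.of_le (by norm_num)) (p1 hg e) hc e,
      integral_partial_mul (p1 hf e) (hg.of_le (by norm_num)) (hc.fderiv_apply ℝ e) e, neg_neg]
  unfold lap4
  simp_rw [Finset.mul_sum, Finset.sum_mul]
  rw [integral_finsetSum, integral_finsetSum]
  · exact Finset.sum_congr rfl fun i _ => h1 _
  · intro i _
    exact ((p2 hf _).mul hg.continuous).integrable_of_hasCompactSupport
      ((hc.fderiv_apply ℝ _).fderiv_apply ℝ _).mul_right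
  · intro i _
    exact (hf.continuous.mul (p2 hg _)).integrable_of_hasCompactSupport hc.mul_right

lemma integral_mul_lap4_lap4 {f g : E4 → ℝ} (hf : ContDiff ℝ 4 f) (hg : ContDiff ℝ 4 g)
    (hc : HasCompactSupport f) :
    ∫ x, f x * lap4 (lap4 g) x = ∫ x, lap4 (lap4 f) x * g x := by
  rw [integral_mul_lap4 (hf.of_le (by norm_num)) (contDiff_lap4 (n := 2) hg) hc,
    integral_mul_lap4 (contDiff_lap4 (n := 2) hf) (hg.of_le (by norm_num))
      (hasCompactSupport_lap4 hc)]

lemma lap4_comp_add_left (f : E4 → ℝ) (a x : E4) :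
    lap4 (fun z => f (a + z)) x = lap4 f (a + x) := by
  unfold lap4
  refine Finset.sum_congr rfl fun i _ => ?_
  simp_rw [fderiv_comp_add_left]
  rw [fderiv_comp_add_left (f := fun z => fderiv ℝ f z (EuclideanSpace.single i 1))]

lemma contDiff_radial {f : ℝ → ℝ} (hf : ContDiff ℝ (⊤ : ℕ∞) f) :
    ContDiff ℝ (⊤ : ℕ∞) (fun z : E4 => f (‖z‖ ^ 2)) :=
  hf.comp (contDiff_norm_sq ℝ)

lemma hasCompactSupport_radial {f : ℝ → ℝ} {R : ℝ} (h0 : ∀ s, R ^ 2 < s → f s = 0) :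
    HasCompactSupport (fun z : E4 => f (‖z‖ ^ 2)) := by
  refine HasCompactSupport.intro (isCompact_closedBall (0 : E4) |R|) fun x hx => h0 _ ?_
  rw [mem_closedBall_zero_iff, not_le] at hx
  rw [← sq_abs R]
  gcongr

/-- Green's identity for the bilaplacian, tested against a radial function centred at `x`. -/
lemma integral_radial_bilap {f : ℝ → ℝ} (hf : ContDiff ℝ (⊤ : ℕ∞) f) {R : ℝ}
    (h0 : ∀ s, R ^ 2 < s → f s = 0) {v : E4 → ℝ} (hv : ContDiff ℝ 4 v) (x : E4) :
    ∫ z, f (‖z‖ ^ 2) * lap4 (lap4 v) (x + z) = ∫ z, radLap (radLap f) (‖z‖ ^ 2) * v (x + z) := by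
  have hg : ContDiff ℝ 4 (fun z => v (x + z)) := hv.comp (contDiff_const.add contDiff_id)
  have h := integral_mul_lap4_lap4 (mod_cast contDiff_infty.1 (contDiff_radial hf) 4) hg
    (hasCompactSupport_radial h0)
  have e1 : lap4 (fun z => v (x + z)) = fun z => lap4 v (x + z) := by
    ext z; exact lap4_comp_add_left v x z
  have e2 : lap4 (fun z => lap4 v (x + z)) = fun z => lap4 (lap4 v) (x + z) := by
    ext z; exact lap4_comp_add_left (lap4 v) x z
  rw [e1, e2] at h
  rw [h]
  refine integral_congr_ae (.of_forall fun z => ?_)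
  exact congrArg (· * v (x + z)) (lap4_lap4_radial hf z)

/-! ### A smoothed logarithm and the associated approximate identity -/

/-- A smooth function on `ℝ` which equals `log s` for `s ≥ 1` and vanishes for `s ≤ 1 / 2`. -/
def ell (s : ℝ) : ℝ := Real.smoothTransition (2 * s - 1) * Real.log s

/-- The radial profile of `Δ² (ell (‖z‖ ^ 2))`. It vanishes for `s > 1` since `log ‖z‖` is
biharmonic on `ℝ⁴ \ {0}`. -/
def bump (s : ℝ) : ℝ := radLap (radLap ell) s

lemma contDiff_ell : ContDiff ℝ (⊤ : ℕ∞) ell := by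
  rw [contDiff_iff_contDiffAt]
  intro s
  by_cases hs : s < 1 / 2
  · refine (contDiffAt_const (c := (0 : ℝ))).congr_of_eventuallyEq ?_
    filter_upwards [Iio_mem_nhds hs] with t ht
    simp only [Set.mem_Iio] at ht
    rw [ell, Real.smoothTransition.zero_of_nonpos (by linarith), zero_mul]
  · have h1 : ContDiffAt ℝ (⊤ : ℕ∞) (fun s : ℝ => Real.smoothTransition (2 * s - 1)) s :=
      (Real.smoothTransition.contDiff.comp (by fun_prop : ContDiff ℝ (⊤ : ℕ∞)
        (fun s : ℝ => 2 * s - 1))).contDiffAt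
    exact h1.mul (Real.contDiffAt_log.2 (by linarith))

lemma ell_of_one_le {s : ℝ} (hs : 1 ≤ s) : ell s = Real.log s := by
  rw [ell, Real.smoothTransition.one_of_one_le (by linarith), one_mul]

lemma deriv_ell {s : ℝ} (hs : 1 < s) : deriv ell s = s⁻¹ := by
  have : ell =ᶠ[𝓝 s] Real.log := by
    filter_upwards [Ioi_mem_nhds hs] with t ht using ell_of_one_le (le_of_lt ht)
  rw [this.deriv_eq, Real.deriv_log]

lemma radLap_ell {s : ℝ} (hs : 1 < s) : radLap ell s = 4 * s⁻¹ := by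
  have : deriv ell =ᶠ[𝓝 s] fun s => s⁻¹ := by
    filter_upwards [Ioi_mem_nhds hs] with t ht using deriv_ell ht
  rw [radLap, this.deriv_eq, deriv_ell hs, deriv_inv]
  have : s ≠ 0 := by positivity
  field_simp
  norm_num

lemma deriv_radLap_ell {s : ℝ} (hs : 1 < s) : deriv (radLap ell) s = -4 * (s ^ 2)⁻¹ := by
  have : radLap ell =ᶠ[𝓝 s] fun s => 4 * s⁻¹ := by
    filter_upwards [Ioi_mem_nhds hs] with t ht using radLap_ell ht
  rw [this.deriv_eq, deriv_const_mul_field, deriv_inv]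
  ring

lemma bump_of_one_lt {s : ℝ} (hs : 1 < s) : bump s = 0 := by
  have h : deriv (radLap ell) =ᶠ[𝓝 s] fun s => -4 * (s ^ 2)⁻¹ := by
    filter_upwards [Ioi_mem_nhds hs] with t ht using deriv_radLap_ell ht
  have hs0 : s ≠ 0 := by positivity
  have h2 : HasDerivAt (fun s : ℝ => -4 * (s ^ 2)⁻¹) (-4 * (-(2 * s) / (s ^ 2) ^ 2)) s := by
    have := ((hasDerivAt_pow 2 s).fun_inv (pow_ne_zero 2 hs0)).const_mul (-4)
    simpa using this
  rw [bump, radLap, h.deriv_eq, deriv_radLap_ell hs, h2.deriv]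
  field_simp
  norm_num

lemma contDiff_bump : ContDiff ℝ (⊤ : ℕ∞) bump :=
  contDiff_radLap (contDiff_radLap contDiff_ell)

lemma contDiff_bumpE : ContDiff ℝ (⊤ : ℕ∞) (fun z : E4 => bump (‖z‖ ^ 2)) :=
  contDiff_radial contDiff_bump

lemma continuous_bumpE : Continuous (fun z : E4 => bump (‖z‖ ^ 2)) := contDiff_bumpE.continuous

lemma hasCompactSupport_bumpE : HasCompactSupport (fun z : E4 => bump (‖z‖ ^ 2)) :=
  hasCompactSupport_radial (R := 1) fun s hs => bump_of_one_lt (by simpa using hs)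

/-- The mass of `Δ² (ell (‖z‖ ^ 2))`, found from `d/dr (2 r⁴ (radLap ell)'(r²)) = r³ bump (r²)`;
this is where the constant in `Δ² log ‖z‖ = -8π² δ₀` comes from. -/
lemma integral_bumpE : ∫ z : E4, bump (‖z‖ ^ 2) = -16 * Real.pi ^ 2 := by
  have hint : Integrable (fun z : E4 => bump (‖z‖ ^ 2)) :=
    continuous_bumpE.integrable_of_hasCompactSupport hasCompactSupport_bumpE
  have hI := (integrable_fun_norm_addHaar (volume : Measure E4)
    (f := fun r => bump (r ^ 2))).1 hint
  have h := integral_fun_norm_addHaar (volume : Measure E4) (fun r => bump (r ^ 2))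
  have hfr : Module.finrank ℝ E4 = 4 := by simp
  rw [hfr] at h hI
  have hD : ∀ r ∈ Set.Ici (0 : ℝ), HasDerivAt (fun r => 2 * (r ^ 4 * deriv (radLap ell) (r ^ 2)))
      (r ^ (4 - 1) • bump (r ^ 2)) r := by
    intro r _
    have h1 : HasDerivAt (deriv (radLap ell)) (deriv (deriv (radLap ell)) (r ^ 2)) (r ^ 2) :=
      (differentiable_infty (contDiff_deriv_infty (contDiff_radLap contDiff_ell)) _).hasDerivAt
    have h2 : HasDerivAt (fun r => deriv (radLap ell) (r ^ 2)) _ r :=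
      HasDerivAt.comp r (h₂ := deriv (radLap ell)) (h := fun r => r ^ 2) h1 (hasDerivAt_pow 2 r)
    have h3 := ((hasDerivAt_pow 4 r).fun_mul h2).const_mul 2
    refine h3.congr_deriv ?_
    simp only [bump, radLap, smul_eq_mul]
    norm_num
    ring
  have hT : Tendsto (fun r : ℝ => 2 * (r ^ 4 * deriv (radLap ell) (r ^ 2))) atTop (𝓝 (-8)) := by
    refine tendsto_const_nhds.congr' ?_
    filter_upwards [eventually_gt_atTop (1 : ℝ)] with r hr
    rw [deriv_radLap_ell (by nlinarith)]
    have : r ≠ 0 := by positivity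
    field_simp
    norm_num
  rw [integral_Ioi_of_hasDerivAt_of_tendsto' hD hI hT] at h
  rw [h, Measure.real, EuclideanSpace.volume_ball]
  have hg : Real.Gamma 3 = 2 := by
    rw [show (3 : ℝ) = (2 : ℕ) + 1 by norm_num, Real.Gamma_nat_eq_factorial]
    norm_num [Nat.factorial]
  have hp : √Real.pi ^ 4 = Real.pi ^ 2 := by
    rw [show (4 : ℕ) = 2 * 2 from rfl, pow_mul, Real.sq_sqrt Real.pi_pos.le]
  simp only [Fintype.card_fin, ENNReal.ofReal_one, one_pow, one_mul, hp]
  norm_num [hg]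
  rw [ENNReal.toReal_ofReal (by positivity)]
  ring

/-- The smoothed logarithm at scale `c⁻¹`; it equals `log s` as soon as `c * s ≥ 1`. -/
def logc (c s : ℝ) : ℝ := -Real.log c + ell (c * s)

lemma contDiff_logc (c : ℝ) : ContDiff ℝ (⊤ : ℕ∞) (logc c) := by
  unfold logc
  exact contDiff_const.add (contDiff_ell.comp (by fun_prop))

lemma logc_eq {c s : ℝ} (hc : 0 < c) (h : 1 ≤ c * s) : logc c s = Real.log s := by
  have hs : 0 < s := by
    by_contra hn
    nlinarith
  rw [logc, ell_of_one_le h, Real.log_mul hc.ne' hs.ne']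
  ring

/-- `logc c s` is a convex combination of `-log c` and `log s`. -/
lemma abs_logc_le {c s : ℝ} (hc : 1 ≤ c) (hs : 0 < s) : |logc c s| ≤ |Real.log s| := by
  by_cases h : 1 ≤ c * s
  · rw [logc_eq (by linarith) h]
  · push Not at h
    have h1 : Real.log c + Real.log s < 0 := by
      rw [← Real.log_mul (by positivity) hs.ne']
      exact Real.log_neg (by positivity) h
    have h2 := Real.log_nonneg hc
    have t0 := Real.smoothTransition.nonneg (2 * (c * s) - 1)
    have t1 := Real.smoothTransition.le_one (2 * (c * s) - 1)
    rw [logc, ell, Real.log_mul (by positivity) hs.ne', abs_of_neg (by linarith : Real.log s < 0),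
      abs_le]
    constructor <;> nlinarith

/-- The bilaplacian of the smoothed logarithm is the bump at the same scale. -/
lemma radLap_logc (c s : ℝ) : radLap (radLap (logc c)) s = c ^ 2 * bump (c * s) :=
  radLap_radLap_scale ell c (-Real.log c) s

/-- `z ↦ ell (‖z‖ ^ 2)` is globally Lipschitz: its gradient decays like `2 / ‖z‖`. -/
lemma lipschitz_ellE : ∃ C : ℝ, 0 ≤ C ∧
    ∀ x y : E4, |ell (‖x‖ ^ 2) - ell (‖y‖ ^ 2)| ≤ C * ‖x - y‖ := by
  have hd := differentiable_infty contDiff_ell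
  have hc : Continuous (fun z : E4 => deriv ell (‖z‖ ^ 2)) :=
    (contDiff_deriv_infty contDiff_ell).continuous.comp (by fun_prop)
  obtain ⟨C, hC⟩ := (isCompact_closedBall (0 : E4) 1).exists_bound_of_continuousOn hc.continuousOn
  have hb : ∀ z ∈ (Set.univ : Set E4), ‖fderiv ℝ (fun z : E4 => ell (‖z‖ ^ 2)) z‖ ≤ 2 * |C| + 2 := by
    intro z _
    rw [(hasFDerivAt_radial hd z).fderiv, norm_smul, ← Nat.cast_smul_eq_nsmul ℝ, norm_smul,
      innerSL_apply_norm]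
    simp only [Nat.cast_ofNat, Real.norm_ofNat]
    by_cases hz : ‖z‖ ≤ 1
    · have h1 := (hC z (by simpa using hz)).trans (le_abs_self C)
      have : ‖deriv ell (‖z‖ ^ 2)‖ * (2 * ‖z‖) ≤ |C| * (2 * 1) := by gcongr
      linarith
    · push Not at hz
      rw [deriv_ell (by nlinarith), norm_inv, norm_pow, norm_norm]
      have h2 : (‖z‖ ^ 2)⁻¹ * (2 * ‖z‖) ≤ 2 := by
        rw [inv_mul_le_iff₀ (by positivity)]
        nlinarith
      linarith [abs_nonneg C]
  refine ⟨2 * |C| + 2, by positivity, fun x y => ?_⟩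
  exact convex_univ.norm_image_sub_le_of_norm_fderiv_le
    (fun z _ => (hasFDerivAt_radial hd z).differentiableAt) hb (Set.mem_univ y) (Set.mem_univ x)

/-! ### Local integrability of the logarithm -/

lemma integrableOn_inv_norm_sq (R : ℝ) :
    IntegrableOn (fun z : E4 => (‖z‖ ^ 2)⁻¹) (Metric.closedBall 0 R) := by
  rw [← integrable_indicator_iff Metric.isClosed_closedBall.measurableSet]
  have he : (Metric.closedBall (0 : E4) R).indicator (fun z : E4 => (‖z‖ ^ 2)⁻¹)
      = fun z => (fun r : ℝ => (Set.Iic R).indicator (fun r => (r ^ 2)⁻¹) r) ‖z‖ := by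
    ext z
    by_cases hz : ‖z‖ ≤ R
    · rw [Set.indicator_of_mem (by simpa using hz)]; simp [hz]
    · rw [Set.indicator_of_notMem (by simpa using hz)]; simp [hz]
  rw [he, integrable_fun_norm_addHaar]
  have hfr : Module.finrank ℝ E4 = 4 := by simp
  rw [hfr]
  have h2 : IntegrableOn ((Set.Iic R).indicator fun y : ℝ => y) (Set.Ioi 0) := by
    rw [IntegrableOn, integrable_indicator_iff measurableSet_Iic, IntegrableOn,
      Measure.restrict_restrict measurableSet_Iic, Set.inter_comm, Set.Ioi_inter_Iic]
    exact (continuous_id.integrableOn_Icc (a := 0) (b := R)).mono_set Set.Ioc_subset_Icc_self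
  refine h2.congr_fun (fun y hy => ?_) measurableSet_Ioi
  have hy' : y ≠ 0 := ne_of_gt hy
  by_cases h : y ≤ R
  · simp only [Set.indicator_apply, Set.mem_Iic, h, if_true, smul_eq_mul]
    field_simp
  · simp [h]

/-- An elementary bound of the logarithmic singularity by an integrable power. -/
lemma abs_log_le_add {t R : ℝ} (ht : 0 < t) (hR : t ≤ R) :
    |Real.log t| ≤ R + 1 + (t ^ 2)⁻¹ := by
  have h1 := Real.log_le_sub_one_of_pos ht
  have h2 := Real.log_le_sub_one_of_pos (inv_pos.2 ht)
  rw [Real.log_inv] at h2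
  have h3 : t⁻¹ ≤ 1 + (t ^ 2)⁻¹ := by
    rw [← inv_pow]; nlinarith [sq_nonneg (t⁻¹ - 1)]
  have h4 : 0 < (t ^ 2)⁻¹ := by positivity
  rw [abs_le]
  constructor <;> linarith

lemma ae_ne (x : E4) : ∀ᵐ y : E4, y ≠ x := by
  simp [ae_iff, measure_singleton]

lemma integrableOn_log_norm (R : ℝ) :
    IntegrableOn (fun z : E4 => Real.log ‖z‖) (Metric.closedBall 0 R) := by
  have h1 : IntegrableOn (fun z : E4 => R + 1 + (‖z‖ ^ 2)⁻¹) (Metric.closedBall 0 R) :=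
    (integrableOn_const (C := R + 1) (isCompact_closedBall (0 : E4) R).measure_lt_top.ne).add
      (integrableOn_inv_norm_sq R)
  refine h1.mono' (Real.measurable_log.comp measurable_norm).aestronglyMeasurable ?_
  filter_upwards [ae_restrict_mem Metric.isClosed_closedBall.measurableSet,
    ae_restrict_of_ae (ae_ne 0)] with z hz hz0
  exact abs_log_le_add (norm_pos_iff.2 hz0) (by simpa using hz)

/-! ### The representation at scale `R` -/

/-- The weighted average of `v` around `x` at scale `R`, against the rescaled kernel
`Δ² (ell (‖z‖ ^ 2))`. The total weight is `-16π²`, not `1`. -/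
def bumpAvg (v : E4 → ℝ) (R : ℝ) (x : E4) : ℝ := ∫ s : E4, bump (‖s‖ ^ 2) * v (x + R • s)

lemma bumpAvg_eq (v : E4 → ℝ) {R : ℝ} (hR : 0 < R) (x : E4) :
    ∫ z : E4, ((R ^ 2)⁻¹) ^ 2 * bump ((R ^ 2)⁻¹ * ‖z‖ ^ 2) * v (x + z) = bumpAvg v R x := by
  have h := Measure.integral_comp_smul (volume : Measure E4)
    (fun z => bump ((R ^ 2)⁻¹ * ‖z‖ ^ 2) * v (x + z)) R
  have hfr : Module.finrank ℝ E4 = 4 := by simp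
  rw [hfr, abs_of_pos (by positivity), smul_eq_mul, ← integral_const_mul] at h
  have e1 : bumpAvg v R x
      = ∫ s : E4, bump ((R ^ 2)⁻¹ * ‖R • s‖ ^ 2) * v (x + R • s) := by
    unfold bumpAvg
    congr 1
    ext s
    rw [norm_smul, mul_pow, Real.norm_eq_abs, sq_abs, inv_mul_cancel_left₀ (by positivity)]
  rw [e1, h]
  congr 1
  ext z
  rw [← mul_assoc]
  congr 3
  rw [← inv_pow, ← inv_pow, ← pow_mul]

lemma integrable_bump_scaled {v : E4 → ℝ} (hv : Continuous v) {R : ℝ} (hR : 0 < R) (x : E4) :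
    Integrable fun z : E4 => ((R ^ 2)⁻¹) ^ 2 * bump ((R ^ 2)⁻¹ * ‖z‖ ^ 2) * v (x + z) := by
  refine Continuous.integrable_of_hasCompactSupport ?_ ?_
  · have := contDiff_bump.continuous
    fun_prop
  · refine HasCompactSupport.mul_right ?_
    refine hasCompactSupport_radial (f := fun s => ((R ^ 2)⁻¹) ^ 2 * bump ((R ^ 2)⁻¹ * s))
      (R := R) fun s hs => ?_
    rw [bump_of_one_lt, mul_zero]
    rwa [inv_mul_eq_div, one_lt_div (by positivity)]

/-- `logc` at the scales `ε` and `R` differ by a compactly supported function, so Green's identity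
applies to the difference without any decay of `v`. -/
lemma bumpAvg_sub {v : E4 → ℝ} (hv : ContDiff ℝ 4 v) {ε R : ℝ} (hε : 0 < ε) (hεR : ε < R)
    (x : E4) : bumpAvg v ε x - bumpAvg v R x =
      ∫ z, (logc (ε ^ 2)⁻¹ (‖z‖ ^ 2) - logc (R ^ 2)⁻¹ (‖z‖ ^ 2)) * lap4 (lap4 v) (x + z) := by
  have hR : 0 < R := hε.trans hεR
  have h0 : ∀ s, R ^ 2 < s → logc (ε ^ 2)⁻¹ s - logc (R ^ 2)⁻¹ s = 0 := by
    intro s hs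
    have h1 : ε ^ 2 < R ^ 2 := by gcongr
    rw [logc_eq (by positivity), logc_eq (by positivity), sub_self]
    · rw [inv_mul_eq_div, one_le_div (by positivity)]; linarith
    · rw [inv_mul_eq_div, one_le_div (by positivity)]; linarith
  rw [integral_radial_bilap ((contDiff_logc _).sub (contDiff_logc _)) h0 hv x,
    ← bumpAvg_eq v hε, ← bumpAvg_eq v hR, ← integral_sub]
  · congr 1
    ext z
    rw [radLap_radLap_sub (contDiff_logc _) (contDiff_logc _), radLap_logc, radLap_logc]
    ring
  · exact integrable_bump_scaled hv.continuous hε x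
  · exact integrable_bump_scaled hv.continuous hR x

lemma tendsto_bumpAvg {v : E4 → ℝ} (hv : Continuous v) (x : E4) :
    Tendsto (fun ε => bumpAvg v ε x) (𝓝[>] 0) (𝓝 (-16 * Real.pi ^ 2 * v x)) := by
  rw [← integral_bumpE, ← integral_mul_const]
  obtain ⟨M, hM⟩ := (isCompact_closedBall x 1).exists_bound_of_continuousOn hv.continuousOn
  have hint : Integrable (fun z : E4 => bump (‖z‖ ^ 2)) :=
    continuous_bumpE.integrable_of_hasCompactSupport hasCompactSupport_bumpE
  refine tendsto_integral_filter_of_dominated_convergence (fun s => |bump (‖s‖ ^ 2)| * M) ?_ ?_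
    (hint.norm.mul_const M) ?_
  · refine .of_forall fun ε => Continuous.aestronglyMeasurable ?_
    have := continuous_bumpE
    fun_prop
  · filter_upwards [Ioc_mem_nhdsGT (zero_lt_one' ℝ)] with ε hε
    refine .of_forall fun s => ?_
    rw [norm_mul, Real.norm_eq_abs]
    by_cases hs : ‖s‖ ≤ 1
    · gcongr
      apply hM
      rw [mem_closedBall_iff_norm, add_sub_cancel_left, norm_smul, Real.norm_eq_abs,
        abs_of_pos hε.1]
      exact mul_le_one₀ hε.2 (norm_nonneg _) hs
    · rw [bump_of_one_lt (by nlinarith [not_le.1 hs])]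
      simp
  · refine .of_forall fun s => ?_
    have h1 : Continuous (fun ε : ℝ => bump (‖s‖ ^ 2) * v (x + ε • s)) := by fun_prop
    have := (h1.tendsto 0).mono_left (nhdsWithin_le_nhds (s := Set.Ioi 0))
    simpa using this

/-- Integrability of the majorant in `logPot_bound`. -/
lemma integrable_logBound {P : E4 → ℝ} (hP : Continuous P) (R : ℝ) (x : E4) :
    Integrable ((Metric.closedBall (0 : E4) R).indicator fun z =>
      (|Real.log (‖z‖ ^ 2)| + |logc (R ^ 2)⁻¹ (‖z‖ ^ 2)|) * |P (x + z)|) := by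
  rw [integrable_indicator_iff Metric.isClosed_closedBall.measurableSet]
  refine IntegrableOn.mul_continuousOn ?_ (by fun_prop) (isCompact_closedBall _ _)
  refine Integrable.add ?_ ?_
  · simp_rw [Real.log_pow]
    exact ((integrableOn_log_norm R).const_mul _).abs
  · refine ContinuousOn.integrableOn_compact (isCompact_closedBall _ _) (Continuous.continuousOn ?_)
    have := (contDiff_logc (R ^ 2)⁻¹).continuous
    fun_prop

/-- The common majorant of the kernels `L` obtained from `log` by regularization at a small scale. -/
lemma logPot_bound {P : E4 → ℝ} {R : ℝ} (hR : 0 < R) (x : E4) {z : E4} {L : ℝ}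
    (hL : |L| ≤ |Real.log (‖z‖ ^ 2)|) (hL2 : R < ‖z‖ → L = Real.log (‖z‖ ^ 2)) :
    ‖(L - logc (R ^ 2)⁻¹ (‖z‖ ^ 2)) * P (x + z)‖ ≤
      (Metric.closedBall (0 : E4) R).indicator (fun z =>
      (|Real.log (‖z‖ ^ 2)| + |logc (R ^ 2)⁻¹ (‖z‖ ^ 2)|) * |P (x + z)|) z := by
  by_cases hz : ‖z‖ ≤ R
  · rw [Set.indicator_of_mem (by simpa using hz), norm_mul, Real.norm_eq_abs, Real.norm_eq_abs]
    gcongr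
    exact (abs_sub _ _).trans (by gcongr)
  · push Not at hz
    rw [Set.indicator_of_notMem (by simpa using hz), hL2 hz, logc_eq (by positivity)]
    · simp
    · rw [inv_mul_eq_div, one_le_div (by positivity)]; gcongr

/-- The representation of `v x` at scale `R`, from `bumpAvg_sub` as `ε → 0`. -/
lemma bumpAvg_limit {v : E4 → ℝ} (hv : ContDiff ℝ 4 v) {R : ℝ} (hR : 0 < R) (x : E4) :
    -16 * Real.pi ^ 2 * v x - bumpAvg v R x =
      ∫ z, (Real.log (‖z‖ ^ 2) - logc (R ^ 2)⁻¹ (‖z‖ ^ 2)) * lap4 (lap4 v) (x + z) := by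
  have hP : Continuous (lap4 (lap4 v)) :=
    (contDiff_lap4 (n := 0) (contDiff_lap4 (n := 2) hv)).continuous
  have h1 := (tendsto_bumpAvg hv.continuous x).sub_const (bumpAvg v R x)
  refine tendsto_nhds_unique h1 ?_
  have h2 : Tendsto (fun ε : ℝ => ∫ z, (logc (ε ^ 2)⁻¹ (‖z‖ ^ 2) - logc (R ^ 2)⁻¹ (‖z‖ ^ 2))
      * lap4 (lap4 v) (x + z)) (𝓝[>] 0) (𝓝 (∫ z, (Real.log (‖z‖ ^ 2) -
        logc (R ^ 2)⁻¹ (‖z‖ ^ 2)) * lap4 (lap4 v) (x + z))) := by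
    refine tendsto_integral_filter_of_dominated_convergence _ ?_ ?_
      (integrable_logBound hP R x) ?_
    · refine .of_forall fun ε => Continuous.aestronglyMeasurable ?_
      have := (contDiff_logc (R ^ 2)⁻¹).continuous
      have := (contDiff_logc (ε ^ 2)⁻¹).continuous
      fun_prop
    · filter_upwards [Ioc_mem_nhdsGT (lt_min hR one_pos)] with ε hε
      filter_upwards [ae_ne 0] with z hz
      have hz' := norm_pos_iff.2 hz
      have he : ε ≤ R ∧ ε ≤ 1 := le_min_iff.1 hε.2
      have he0 : 0 < ε := hε.1
      refine logPot_bound hR x (abs_logc_le ?_ (by positivity)) fun h => ?_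
      · rw [one_le_inv₀ (by positivity)]
        exact pow_le_one₀ he0.le he.2
      · refine logc_eq (by positivity) ?_
        rw [inv_mul_eq_div, one_le_div (by positivity)]
        have := he.1.trans h.le
        gcongr
    · filter_upwards [ae_ne 0] with z hz
      have hz' := norm_pos_iff.2 hz
      refine tendsto_const_nhds.congr' ?_
      filter_upwards [Ioc_mem_nhdsGT hz'] with ε hε
      have he0 : 0 < ε := hε.1
      have he1 : ε ≤ ‖z‖ := hε.2
      rw [logc_eq (c := (ε ^ 2)⁻¹) (by positivity)]
      rw [inv_mul_eq_div, one_le_div (by positivity)]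
      gcongr
  refine h2.congr' ?_
  filter_upwards [Ioo_mem_nhdsGT hR] with ε hε
  rw [bumpAvg_sub hv hε.1 hε.2]

lemma integrable_logPot {P : E4 → ℝ} (hP : Continuous P) {R : ℝ} (hR : 0 < R) (x : E4) :
    Integrable fun z => (Real.log (‖z‖ ^ 2) - logc (R ^ 2)⁻¹ (‖z‖ ^ 2)) * P (x + z) := by
  refine (integrable_logBound hP R x).mono' ?_ (.of_forall fun z =>
    logPot_bound hR x le_rfl fun _ => rfl)
  have := (contDiff_logc (R ^ 2)⁻¹).continuous
  have := Real.measurable_log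
  have h : Measurable fun z : E4 => (Real.log (‖z‖ ^ 2) - logc (R ^ 2)⁻¹ (‖z‖ ^ 2)) * P (x + z) := by
    fun_prop
  exact h.aestronglyMeasurable

/-! ### The defect of the representation formula is additive -/

/-- The logarithmic potential of the density `P`, normalized to vanish at the origin. -/
def logPot (P : E4 → ℝ) (x : E4) : ℝ :=
  ∫ y, P y * (Real.log (‖y - x‖ ^ 2) - Real.log (‖y‖ ^ 2))

lemma continuous_bilap {v : E4 → ℝ} (hv : ContDiff ℝ 4 v) : Continuous (lap4 (lap4 v)) :=
  (contDiff_lap4 (n := 0) (contDiff_lap4 (n := 2) hv)).continuous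

lemma integrable_logPot_centered {P : E4 → ℝ} (hP : Continuous P) {R : ℝ} (hR : 0 < R) (x : E4) :
    Integrable fun y => (Real.log (‖y - x‖ ^ 2) - logc (R ^ 2)⁻¹ (‖y - x‖ ^ 2)) * P y := by
  have h := (integrable_logPot hP hR x).comp_sub_right x
  simpa using h

lemma integral_logPot_centered (P : E4 → ℝ) (R : ℝ) (x : E4) :
    ∫ z, (Real.log (‖z‖ ^ 2) - logc (R ^ 2)⁻¹ (‖z‖ ^ 2)) * P (x + z)
      = ∫ y, (Real.log (‖y - x‖ ^ 2) - logc (R ^ 2)⁻¹ (‖y - x‖ ^ 2)) * P y := by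
  rw [← integral_sub_right_eq_self _ x]
  simp

/-- Translating the smoothed logarithm at scale `R` changes it uniformly by `O(1 / R)`. -/
lemma logc_sub_le {C : ℝ} (hC : ∀ x y : E4, |ell (‖x‖ ^ 2) - ell (‖y‖ ^ 2)| ≤ C * ‖x - y‖)
    {R : ℝ} (hR : 0 < R) (x y : E4) :
    |logc (R ^ 2)⁻¹ (‖y - x‖ ^ 2) - logc (R ^ 2)⁻¹ (‖y‖ ^ 2)| ≤ C * (‖x‖ / R) := by
  have h := hC (R⁻¹ • (y - x)) (R⁻¹ • y)
  rw [← smul_sub, sub_sub_cancel_left, norm_smul, norm_smul, norm_smul, norm_neg, norm_inv,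
    Real.norm_of_nonneg hR.le, mul_pow, mul_pow, inv_pow] at h
  unfold logc
  rw [add_sub_add_left_eq_sub]
  refine h.trans (le_of_eq ?_)
  ring

lemma integrable_logc_diff {P : E4 → ℝ} (hPi : Integrable P) {R : ℝ} (hR : 0 < R) (x : E4) :
    Integrable fun y =>
      (logc (R ^ 2)⁻¹ (‖y - x‖ ^ 2) - logc (R ^ 2)⁻¹ (‖y‖ ^ 2)) * P y := by
  obtain ⟨C, hC0, hC⟩ := lipschitz_ellE
  refine hPi.bdd_mul (c := C * (‖x‖ / R)) (Continuous.aestronglyMeasurable ?_)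
    (.of_forall fun y => logc_sub_le hC hR x y)
  have := (contDiff_logc (R ^ 2)⁻¹).continuous
  fun_prop

lemma integrable_logKernel {P : E4 → ℝ} (hP : Continuous P) (hPi : Integrable P) (x : E4) :
    Integrable fun y => P y * (Real.log (‖y - x‖ ^ 2) - Real.log (‖y‖ ^ 2)) := by
  have h1 := integrable_logPot_centered hP one_pos x
  have h0 := integrable_logPot_centered hP one_pos 0
  refine ((h1.sub h0).add (integrable_logc_diff hPi one_pos x)).congr (.of_forall fun y => ?_)
  simp only [Pi.add_apply, Pi.sub_apply, sub_zero]
  ring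

/-- The regularized kernel at scale `R` drops out of differences as `R → ∞`, since it is Lipschitz
with constant `O(1 / R)`; only the total mass of `Δ²v` is used. -/
lemma tendsto_bumpAvg_sub {v : E4 → ℝ} (hv : ContDiff ℝ 4 v) (hPi : Integrable (lap4 (lap4 v)))
    (x : E4) : Tendsto (fun R => bumpAvg v R x - bumpAvg v R 0) atTop
      (𝓝 (-16 * Real.pi ^ 2 * (v x - v 0) - logPot (lap4 (lap4 v)) x)) := by
  set P := lap4 (lap4 v) with hPdef
  have hP : Continuous P := continuous_bilap hv
  obtain ⟨C, hC0, hC⟩ := lipschitz_ellE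
  have hlim : Tendsto (fun R : ℝ => C * (‖x‖ / R) * ∫ y, |P y|) atTop (𝓝 0) := by
    have := ((tendsto_const_nhds (x := ‖x‖)).div_atTop tendsto_id).const_mul C
    simpa using this.mul_const (∫ y, |P y|)
  rw [tendsto_iff_norm_sub_tendsto_zero]
  refine squeeze_zero' (.of_forall fun _ => norm_nonneg _) ?_ hlim
  filter_upwards [eventually_gt_atTop 0] with R hR
  have e1 := bumpAvg_limit hv hR x
  have e0 := bumpAvg_limit hv hR 0
  rw [integral_logPot_centered] at e1 e0
  have key : bumpAvg v R x - bumpAvg v R 0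
      - (-16 * Real.pi ^ 2 * (v x - v 0) - logPot P x)
      = ∫ y, (logc (R ^ 2)⁻¹ (‖y - x‖ ^ 2) - logc (R ^ 2)⁻¹ (‖y‖ ^ 2)) * P y := by
    have h1 := integrable_logPot_centered hP hR x
    have h0 := integrable_logPot_centered hP hR 0
    have h2 := integrable_logKernel hP hPi x
    have h3 : bumpAvg v R x - bumpAvg v R 0
      - (-16 * Real.pi ^ 2 * (v x - v 0) - logPot P x)
      = logPot P x - ((-16 * Real.pi ^ 2 * v x - bumpAvg v R x)
        - (-16 * Real.pi ^ 2 * v 0 - bumpAvg v R 0)) := by ring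
    rw [h3, e1, e0, logPot, ← integral_sub' h1 h0, ← integral_sub' h2 (h1.sub h0)]
    refine integral_congr_ae (.of_forall fun y => ?_)
    simp only [Pi.sub_apply, sub_zero]
    ring
  rw [key, ← integral_const_mul]
  refine norm_integral_le_of_norm_le (hPi.abs.const_mul _) (.of_forall fun y => ?_)
  rw [norm_mul]
  exact mul_le_mul_of_nonneg_right (logc_sub_le hC hR x y) (norm_nonneg _)

lemma bumpAvg_eq_shift (v : E4 → ℝ) {R : ℝ} (hR : 0 < R) (x : E4) :
    bumpAvg v R x = ∫ s : E4, bump (‖s - R⁻¹ • x‖ ^ 2) * v (R • s) := by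
  rw [bumpAvg, ← integral_sub_right_eq_self _ (R⁻¹ • x)]
  refine integral_congr_ae (.of_forall fun s => ?_)
  simp only [smul_sub, smul_smul, mul_inv_cancel₀ hR.ne', one_smul, add_sub_cancel]

/-- A mixed second difference is controlled by the Lipschitz constant of the gradient. -/
lemma bumpE_second_difference : ∃ K : ℝ, 0 ≤ K ∧ ∀ s a b : E4,
    |bump (‖s - (a + b)‖ ^ 2) - bump (‖s - a‖ ^ 2) - bump (‖s - b‖ ^ 2) + bump (‖s‖ ^ 2)|
      ≤ K * ‖a‖ * ‖b‖ := by
  set Q : E4 → ℝ := fun z => bump (‖z‖ ^ 2) with hQ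
  have hQ1 : ContDiff ℝ (⊤ : ℕ∞) Q := contDiff_bumpE
  have hd : Differentiable ℝ Q := hQ1.differentiable (by simp)
  obtain ⟨K, hK⟩ := ContDiff.lipschitzWith_of_hasCompactSupport (𝕂 := ℝ) (n := 1)
    (hasCompactSupport_bumpE.fderiv ℝ) (hQ1.fderiv_right (m := 1) (by norm_cast)) (by simp)
  refine ⟨K, K.2, fun s a b => ?_⟩
  have hb : ∀ z ∈ (Set.univ : Set E4), HasFDerivWithinAt (fun z => Q (z - b) - Q z)
      (fderiv ℝ Q (z - b) - fderiv ℝ Q z) Set.univ z := by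
    intro z _
    refine HasFDerivAt.hasFDerivWithinAt (HasFDerivAt.fun_sub ?_ (hd z).hasFDerivAt)
    exact (hd (z - b)).hasFDerivAt.comp z ((hasFDerivAt_id z).sub_const b)
  have hbd : ∀ z ∈ (Set.univ : Set E4), ‖fderiv ℝ Q (z - b) - fderiv ℝ Q z‖ ≤ K * ‖b‖ := by
    intro z _
    have := hK.dist_le_mul (z - b) z
    rwa [dist_eq_norm, dist_eq_norm, sub_sub_cancel_left, norm_neg] at this
  have h := convex_univ.norm_image_sub_le_of_norm_hasFDerivWithin_le hb hbd
    (Set.mem_univ s) (Set.mem_univ (s - a))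
  rw [sub_sub_cancel_left, norm_neg, Real.norm_eq_abs, sub_sub s a b] at h
  calc _ = |Q (s - (a + b)) - Q (s - a) - (Q (s - b) - Q s)| := by
        congr 1; simp only [hQ]; ring
    _ ≤ _ := h
    _ = _ := by ring

lemma growth_bound {v : E4 → ℝ} (hv : Continuous v)
    (hd : Tendsto (fun x : E4 => v x / ‖x‖ ^ 2) (cocompact E4) (𝓝 0)) :
    ∃ C : ℝ, 0 ≤ C ∧ ∀ x, |v x| ≤ C * (1 + ‖x‖ ^ 2) := by
  have h1 : ∀ᶠ x in cocompact E4, |v x| ≤ ‖x‖ ^ 2 := by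
    have h2 := hd.eventually (Metric.ball_mem_nhds 0 one_pos)
    filter_upwards [h2, (isCompact_singleton (x := (0 : E4))).compl_mem_cocompact] with x hx hx0
    have hx' : 0 < ‖x‖ := norm_pos_iff.2 (by simpa using hx0)
    rw [dist_zero_right, norm_div, norm_pow, norm_norm, div_lt_one (by positivity)] at hx
    exact hx.le
  obtain ⟨S, hS, hS'⟩ := mem_cocompact.1 h1
  obtain ⟨C, hC⟩ := hS.exists_bound_of_continuousOn hv.continuousOn
  refine ⟨|C| + 1, by positivity, fun x => ?_⟩
  by_cases hx : x ∈ S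
  · have := (hC x hx).trans (le_abs_self C)
    rw [Real.norm_eq_abs] at this
    nlinarith [abs_nonneg C, sq_nonneg ‖x‖, mul_nonneg (abs_nonneg C) (sq_nonneg ‖x‖)]
  · have : |v x| ≤ ‖x‖ ^ 2 := hS' hx
    nlinarith [abs_nonneg C, sq_nonneg ‖x‖, mul_nonneg (abs_nonneg C) (sq_nonneg ‖x‖)]

lemma tendsto_scaled_zero {v : E4 → ℝ}
    (hd : Tendsto (fun x : E4 => v x / ‖x‖ ^ 2) (cocompact E4) (𝓝 0)) (s : E4) :
    Tendsto (fun R : ℝ => |v (R • s)| / R ^ 2) atTop (𝓝 0) := by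
  by_cases hs : s = 0
  · subst hs
    simp only [smul_zero]
    exact tendsto_const_nhds.div_atTop (tendsto_pow_atTop two_ne_zero)
  · have hs' : 0 < ‖s‖ := norm_pos_iff.2 hs
    have h1 : Tendsto (fun R : ℝ => R • s) atTop (cocompact E4) := by
      rw [← Metric.cobounded_eq_cocompact, ← tendsto_norm_atTop_iff_cobounded]
      simp_rw [norm_smul]
      exact tendsto_norm_atTop_atTop.atTop_mul_const hs'
    have h2 := ((hd.comp h1).abs).mul_const (‖s‖ ^ 2)
    simp only [abs_zero, zero_mul] at h2
    refine h2.congr' ?_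
    filter_upwards [eventually_gt_atTop 0] with R hR
    simp only [Function.comp, norm_smul, abs_div, abs_pow, abs_mul, abs_norm, Real.norm_eq_abs,
      abs_of_pos hR]
    field_simp

/-- Since `v = o(‖x‖²)`, mixed second differences of the averages vanish in the limit. -/
lemma bumpAvg_second_difference {v : E4 → ℝ} (hv : Continuous v)
    (hd : Tendsto (fun x : E4 => v x / ‖x‖ ^ 2) (cocompact E4) (𝓝 0)) (x h : E4) :
    Tendsto (fun R => bumpAvg v R (x + h) - bumpAvg v R x - bumpAvg v R h + bumpAvg v R 0) atTop
      (𝓝 0) := by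
  obtain ⟨K, hK0, hK⟩ := bumpE_second_difference
  obtain ⟨C, hC0, hC⟩ := growth_bound hv hd
  set D : ℝ → E4 → ℝ := fun R s => (bump (‖s - (R⁻¹ • x + R⁻¹ • h)‖ ^ 2)
    - bump (‖s - R⁻¹ • x‖ ^ 2) - bump (‖s - R⁻¹ • h‖ ^ 2) + bump (‖s‖ ^ 2)) * v (R • s) with hD
  have hDle : ∀ R : ℝ, 0 < R → ∀ s, |D R s| ≤ K * ‖x‖ * ‖h‖ * (|v (R • s)| / R ^ 2) := by
    intro R hR s
    have h1 := hK s (R⁻¹ • x) (R⁻¹ • h)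
    rw [norm_smul, norm_smul, norm_inv, Real.norm_of_nonneg hR.le] at h1
    rw [hD, abs_mul]
    calc _ ≤ K * (R⁻¹ * ‖x‖) * (R⁻¹ * ‖h‖) * |v (R • s)| := by gcongr
      _ = _ := by field_simp
  have hcont : ∀ (R : ℝ) (a : E4), Continuous fun s : E4 => bump (‖s - a‖ ^ 2) * v (R • s) := by
    intro R a
    have := contDiff_bump.continuous
    fun_prop
  have hint : ∀ (R : ℝ) (a : E4), Integrable fun s : E4 => bump (‖s - a‖ ^ 2) * v (R • s) := by
    intro R a
    refine (hcont R a).integrable_of_hasCompactSupport (HasCompactSupport.mul_right ?_)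
    exact hasCompactSupport_bumpE.comp_homeomorph (Homeomorph.subRight a)
  have heq : ∀ᶠ R in atTop, ∫ s, D R s
      = bumpAvg v R (x + h) - bumpAvg v R x - bumpAvg v R h + bumpAvg v R 0 := by
    filter_upwards [eventually_gt_atTop 0] with R hR
    rw [bumpAvg_eq_shift v hR, bumpAvg_eq_shift v hR, bumpAvg_eq_shift v hR, bumpAvg_eq_shift v hR,
      ← integral_sub' (hint _ _) (hint _ _), ← integral_sub' ((hint _ _).sub (hint _ _)) (hint _ _),
      ← integral_add' (((hint _ _).sub (hint _ _)).sub (hint _ _)) (hint _ _)]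
    refine integral_congr_ae (.of_forall fun s => ?_)
    simp only [hD, smul_add, smul_zero, sub_zero, Pi.add_apply, Pi.sub_apply]
    ring
  refine Tendsto.congr' heq ?_
  rw [show (0 : ℝ) = ∫ _s : E4, (0 : ℝ) by simp]
  refine tendsto_integral_filter_of_dominated_convergence
    ((Metric.closedBall (0 : E4) 2).indicator fun _ => K * ‖x‖ * ‖h‖ * (5 * C)) ?_ ?_ ?_ ?_
  · refine .of_forall fun R => Continuous.aestronglyMeasurable ?_
    have := contDiff_bump.continuous
    simp only [hD]
    fun_prop
  · filter_upwards [eventually_ge_atTop (1 + ‖x‖ + ‖h‖)] with R hR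
    refine .of_forall fun s => ?_
    have hx := norm_nonneg x
    have hh := norm_nonneg h
    have hR1 : 1 ≤ R := by linarith
    have hR0 : 0 < R := by linarith
    by_cases hs : ‖s‖ ≤ 2
    · rw [Set.indicator_of_mem (by simpa using hs)]
      refine (hDle R (by linarith) s).trans ?_
      gcongr
      rw [div_le_iff₀ (by positivity)]
      refine (hC _).trans ?_
      rw [norm_smul, Real.norm_of_nonneg hR0.le, mul_assoc, mul_left_comm]
      have h4 : ‖s‖ ^ 2 ≤ 2 ^ 2 := by gcongr
      have h5 : 1 ≤ R ^ 2 := one_le_pow₀ hR1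
      nlinarith [mul_le_mul_of_nonneg_left h4 (sq_nonneg R)]
    · push Not at hs
      rw [Set.indicator_of_notMem (by simpa using hs)]
      have hz : ∀ a : E4, ‖a‖ ≤ 1 → bump (‖s - a‖ ^ 2) = 0 := by
        intro a ha
        refine bump_of_one_lt ?_
        have := norm_sub_norm_le s a
        nlinarith
      have ha : ‖R⁻¹ • x‖ + ‖R⁻¹ • h‖ ≤ 1 := by
        rw [norm_smul, norm_smul, norm_inv, Real.norm_of_nonneg hR0.le, ← mul_add,
          inv_mul_le_iff₀ hR0]
        linarith
      have h0 := hz 0 (by simp)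
      rw [sub_zero] at h0
      simp only [hD]
      rw [hz _ ((norm_add_le _ _).trans ha), hz _ (by linarith [norm_nonneg (R⁻¹ • h)]),
        hz _ (by linarith [norm_nonneg (R⁻¹ • x)]), h0]
      simp
  · rw [integrable_indicator_iff Metric.isClosed_closedBall.measurableSet]
    exact integrableOn_const (isCompact_closedBall (0 : E4) 2).measure_lt_top.ne
  · refine .of_forall fun s => ?_
    have h1 := (tendsto_scaled_zero hd s).const_mul (K * ‖x‖ * ‖h‖)
    rw [mul_zero] at h1
    refine squeeze_zero_norm' ?_ h1
    filter_upwards [eventually_gt_atTop 0] with R hR using hDle R hR s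

/-- The difference between `v` and its logarithmic potential is additive up to a constant. -/
lemma exists_additive_defect {v : E4 → ℝ} (hv : ContDiff ℝ 4 v)
    (hPi : Integrable (lap4 (lap4 v)))
    (hd : Tendsto (fun x : E4 => v x / ‖x‖ ^ 2) (cocompact E4) (𝓝 0)) :
    ∃ A : E4 →+ ℝ, ∀ x, v x =
      -1 / (16 * Real.pi ^ 2) * logPot (lap4 (lap4 v)) x + v 0 + A x := by
  set H : E4 → ℝ := fun x =>
    -16 * Real.pi ^ 2 * (v x - v 0) - logPot (lap4 (lap4 v)) x with hH
  have hadd : ∀ x h, H (x + h) = H x + H h := by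
    intro x h
    have h1 := ((tendsto_bumpAvg_sub hv hPi (x + h)).sub (tendsto_bumpAvg_sub hv hPi x)).sub
      (tendsto_bumpAvg_sub hv hPi h)
    have h2 := tendsto_nhds_unique (h1.congr fun R => by ring)
      (bumpAvg_second_difference hv.continuous hd x h)
    simp only [hH]
    linarith
  refine ⟨AddMonoidHom.mk' (fun x => -1 / (16 * Real.pi ^ 2) * H x) fun a b => ?_, fun x => ?_⟩
  · rw [hadd, mul_add]
  · have := Real.pi_pos
    simp only [AddMonoidHom.mk'_apply, hH]
    field_simp
    ring

/-! ### Growth of the density `P₄` -/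

lemma integrable_P4 {u : E4 → ℝ} (hmass : FiniteMass4 u) : Integrable (P4 u) := by
  have h := Integrable.integral_prod_left (μ := (volume : Measure E4)) (ν := (volume : Measure E4))
    hmass
  refine h.congr (.of_forall fun y => ?_)
  simp only [P4]
  rw [← integral_mul_const]
  congr 1
  ext z
  ring

lemma P4_nonneg (u : E4 → ℝ) (y : E4) : 0 ≤ P4 u y :=
  mul_nonneg (integral_nonneg fun z => by positivity) (sq_nonneg _)

lemma poly_bound {u : E4 → ℝ} (hu : Continuous u)
    (hg : ∃ K C R : ℝ, 0 < K ∧ 0 < C ∧ 0 < R ∧ ∀ x : E4, R ≤ ‖x‖ → u x ≤ C * ‖x‖ ^ K) :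
    ∃ (C : ℝ) (k : ℕ), 0 < C ∧ ∀ x, u x ≤ C * (1 + ‖x‖) ^ k := by
  obtain ⟨K, C, R, hK, hC, hR, h⟩ := hg
  obtain ⟨M, hM⟩ := (isCompact_closedBall (0 : E4) R).exists_bound_of_continuousOn hu.continuousOn
  refine ⟨C + |M|, ⌈K⌉₊, by positivity, fun x => ?_⟩
  have h1 : 1 ≤ (1 + ‖x‖) ^ ⌈K⌉₊ := one_le_pow₀ (by linarith [norm_nonneg x])
  by_cases hx : R ≤ ‖x‖
  · have h2 : ‖x‖ ^ K ≤ (1 + ‖x‖) ^ ⌈K⌉₊ := by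
      rw [← Real.rpow_natCast]
      calc ‖x‖ ^ K ≤ (1 + ‖x‖) ^ K := by gcongr; linarith
        _ ≤ _ := Real.rpow_le_rpow_of_exponent_le (by linarith [norm_nonneg x]) (Nat.le_ceil K)
    have := h x hx
    nlinarith [abs_nonneg M, norm_nonneg x, Real.rpow_nonneg (norm_nonneg x) K]
  · have := (le_abs_self _).trans ((hM x (by simpa using (not_le.1 hx).le)).trans (le_abs_self M))
    nlinarith [abs_nonneg M]

/-- The kernel `‖z‖⁻²` truncated to the unit ball. -/
def invSq (z : E4) : ℝ := (Metric.closedBall (0 : E4) 1).indicator (fun z => (‖z‖ ^ 2)⁻¹) z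

lemma invSq_nonneg (z : E4) : 0 ≤ invSq z := Set.indicator_nonneg (fun _ _ => by positivity) _

lemma invSq_of_le {z : E4} (hz : ‖z‖ ≤ 1) : invSq z = (‖z‖ ^ 2)⁻¹ :=
  Set.indicator_of_mem (by simpa using hz) _

lemma integrable_invSq : Integrable invSq :=
  (integrable_indicator_iff Metric.isClosed_closedBall.measurableSet).2 (integrableOn_inv_norm_sq 1)

/-- The powers of `1 + t` needed in `P4_growth`, with `t = ‖y‖`, `t₀ = ‖y₀‖`, `d = ‖y₀ - y‖`. -/
lemma growth_arith {C J B t t₀ d w I : ℝ} {k : ℕ} (hC : 0 ≤ C) (hJ : 0 ≤ J) (hB : 0 ≤ B)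
    (ht : 0 ≤ t) (ht₀ : 0 ≤ t₀) (hd : 0 ≤ d) (hdt : d ≤ t₀ + t) (hw : 0 ≤ w)
    (hwC : w ≤ C * (1 + t) ^ k)
    (hI : I ≤ (C * (2 + t) ^ k) ^ 2 * J + (1 + d) ^ 2 * B) :
    I * w ^ 2 ≤ ((C * 2 ^ k) ^ 2 * J + (1 + t₀) ^ 2 * B) * C ^ 2 * (1 + t) ^ (4 * k + 2) := by
  have hone : 1 ≤ 1 + t := by linarith
  have h1 : (C * (2 + t) ^ k) ^ 2 * J ≤ (C * 2 ^ k) ^ 2 * J * (1 + t) ^ (2 * k + 2) := by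
    have e1 : (2 + t) ^ k ≤ (2 * (1 + t)) ^ k := pow_le_pow_left₀ (by positivity) (by linarith) _
    have e2 : (1 + t) ^ (2 * k) ≤ (1 + t) ^ (2 * k + 2) := pow_le_pow_right₀ hone (by omega)
    calc (C * (2 + t) ^ k) ^ 2 * J ≤ (C * (2 * (1 + t)) ^ k) ^ 2 * J :=
          mul_le_mul_of_nonneg_right (pow_le_pow_left₀ (by positivity)
            (mul_le_mul_of_nonneg_left e1 hC) _) hJ
      _ = (C * 2 ^ k) ^ 2 * J * (1 + t) ^ (2 * k) := by rw [mul_pow 2 (1 + t)]; ring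
      _ ≤ _ := mul_le_mul_of_nonneg_left e2 (by positivity)
  have h2 : (1 + d) ^ 2 * B ≤ (1 + t₀) ^ 2 * B * (1 + t) ^ (2 * k + 2) := by
    have h3 : 1 + d ≤ (1 + t₀) * (1 + t) := by nlinarith [mul_nonneg ht ht₀]
    have e2 : (1 + t) ^ 2 ≤ (1 + t) ^ (2 * k + 2) := pow_le_pow_right₀ hone (by omega)
    calc (1 + d) ^ 2 * B ≤ ((1 + t₀) * (1 + t)) ^ 2 * B :=
          mul_le_mul_of_nonneg_right (pow_le_pow_left₀ (by positivity) h3 _) hB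
      _ = (1 + t₀) ^ 2 * B * (1 + t) ^ 2 := by ring
      _ ≤ _ := mul_le_mul_of_nonneg_left e2 (by positivity)
  calc I * w ^ 2 ≤ (((C * 2 ^ k) ^ 2 * J + (1 + t₀) ^ 2 * B) * (1 + t) ^ (2 * k + 2))
        * (C * (1 + t) ^ k) ^ 2 :=
        mul_le_mul (by linarith) (pow_le_pow_left₀ hw hwC _) (by positivity) (by positivity)
    _ = _ := by ring

/-- If `u` is not identically zero, finiteness of the mass bounds the Riesz potential of `u²` at
one point, hence (away from the diagonal) everywhere, with quadratic growth. -/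
lemma P4_growth {u : E4 → ℝ} (hu : Continuous u) (hpos : ∀ x, 0 ≤ u x) (hmass : FiniteMass4 u)
    {x₀ : E4} (hx₀ : u x₀ ≠ 0) {C : ℝ} {k : ℕ} (hC : 0 < C)
    (hg : ∀ x, u x ≤ C * (1 + ‖x‖) ^ k) :
    ∃ (D : ℝ) (m : ℕ), 0 ≤ D ∧ ∀ y, P4 u y ≤ D * (1 + ‖y‖) ^ m := by
  have hae : ∀ᵐ y : E4, Integrable (fun z => u y ^ 2 * u z ^ 2 / ‖y - z‖ ^ 2) :=
    Integrable.prod_right_ae (μ := (volume : Measure E4)) (ν := (volume : Measure E4)) hmass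
  have hopen : IsOpen {y : E4 | u y ≠ 0} := isOpen_ne_fun hu continuous_const
  have hdense := (Measure.dense_of_ae hae)
  obtain ⟨y₀, hy₀u, hy₀⟩ := hdense.inter_open_nonempty _ hopen ⟨x₀, hx₀⟩
  have hI : Integrable (fun z => u z ^ 2 / ‖y₀ - z‖ ^ 2) := by
    refine (hy₀.const_mul (u y₀ ^ 2)⁻¹).congr (.of_forall fun z => ?_)
    have : u y₀ ≠ 0 := hy₀u
    simp only
    field_simp
  set B := ∫ z, u z ^ 2 / ‖y₀ - z‖ ^ 2 with hB
  have hB0 : 0 ≤ B := integral_nonneg fun z => by positivity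
  set J := ∫ z, invSq z with hJ
  have hJ0 : 0 ≤ J := integral_nonneg invSq_nonneg
  have hIy : ∀ y, ∫ z, u z ^ 2 / ‖y - z‖ ^ 2
      ≤ (C * (2 + ‖y‖) ^ k) ^ 2 * J + (1 + ‖y₀ - y‖) ^ 2 * B := by
    intro y
    have i1 : Integrable fun z => (C * (2 + ‖y‖) ^ k) ^ 2 * invSq (z - y) :=
      (integrable_invSq.comp_sub_right y).const_mul _
    have i2 := hI.const_mul ((1 + ‖y₀ - y‖) ^ 2)
    have e : (C * (2 + ‖y‖) ^ k) ^ 2 * J + (1 + ‖y₀ - y‖) ^ 2 * B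
        = ∫ z, ((C * (2 + ‖y‖) ^ k) ^ 2 * invSq (z - y)
          + (1 + ‖y₀ - y‖) ^ 2 * (u z ^ 2 / ‖y₀ - z‖ ^ 2)) := by
      rw [integral_add i1 i2, integral_const_mul, integral_const_mul, integral_sub_right_eq_self]
    rw [e]
    refine integral_mono_of_nonneg (.of_forall fun z => by positivity) (i1.add i2) ?_
    filter_upwards [ae_ne y₀, ae_ne y] with z hz0 hz
    have hn0 : 0 < ‖y₀ - z‖ := norm_pos_iff.2 (sub_ne_zero.2 hz0.symm)
    have hn : 0 < ‖y - z‖ := norm_pos_iff.2 (sub_ne_zero.2 hz.symm)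
    by_cases h1 : ‖z - y‖ ≤ 1
    · have h2 : u z ≤ C * (2 + ‖y‖) ^ k := by
        refine (hg z).trans ?_
        have : ‖z‖ ≤ 1 + ‖y‖ := by
          have := norm_add_le (z - y) y
          rw [sub_add_cancel] at this
          linarith
        have h3 : 1 + ‖z‖ ≤ 2 + ‖y‖ := by linarith
        exact mul_le_mul_of_nonneg_left (pow_le_pow_left₀ (by positivity) h3 _) hC.le
      rw [invSq_of_le h1, norm_sub_rev z y, div_eq_mul_inv]
      have h3 : 0 ≤ (1 + ‖y₀ - y‖) ^ 2 * (u z ^ 2 / ‖y₀ - z‖ ^ 2) := by positivity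
      have h4 := hpos z
      have : u z ^ 2 * (‖y - z‖ ^ 2)⁻¹ ≤ (C * (2 + ‖y‖) ^ k) ^ 2 * (‖y - z‖ ^ 2)⁻¹ := by gcongr
      linarith
    · have h3 : 0 ≤ (C * (2 + ‖y‖) ^ k) ^ 2 * invSq (z - y) :=
        mul_nonneg (sq_nonneg _) (invSq_nonneg _)
      have h4 : ‖y₀ - z‖ ≤ (1 + ‖y₀ - y‖) * ‖y - z‖ := by
        have h5 := norm_add_le (y₀ - y) (y - z)
        rw [sub_add_sub_cancel] at h5
        rw [norm_sub_rev z y] at h1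
        nlinarith [norm_nonneg (y₀ - y)]
      have h6 : u z ^ 2 / ‖y - z‖ ^ 2 ≤ (1 + ‖y₀ - y‖) ^ 2 * (u z ^ 2 / ‖y₀ - z‖ ^ 2) := by
        rw [← mul_div_assoc, div_le_div_iff₀ (by positivity) (by positivity)]
        calc u z ^ 2 * ‖y₀ - z‖ ^ 2 ≤ u z ^ 2 * ((1 + ‖y₀ - y‖) * ‖y - z‖) ^ 2 := by gcongr
          _ = _ := by ring
      linarith
  refine ⟨((C * 2 ^ k) ^ 2 * J + (1 + ‖y₀‖) ^ 2 * B) * C ^ 2, 4 * k + 2, by positivity,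
    fun y => ?_⟩
  refine growth_arith hC.le hJ0 hB0 (norm_nonneg y) (norm_nonneg y₀) (norm_nonneg _)
    (norm_sub_le y₀ y) (hpos y) (hg y) (hIy y)

/-! ### Asymptotics of the logarithmic potential -/

/-- The normalized kernel with its singularity at `y = x` truncated. -/
def kerFar (x y : E4) : ℝ := Real.log ‖x‖ + Real.log ‖y‖ - Real.log (max ‖y - x‖ 1)

/-- The singular part of the kernel, supported in the unit ball around `x`. -/
def kerNear (x y : E4) : ℝ := -Real.log (min ‖y - x‖ 1)

lemma kerFar_add_kerNear (x y : E4) :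
    kerFar x y + kerNear x y = Real.log ‖x‖ + Real.log ‖y‖ - Real.log ‖y - x‖ := by
  unfold kerFar kerNear
  rcases le_total ‖y - x‖ 1 with h | h
  · rw [max_eq_right h, min_eq_left h]; simp; ring
  · rw [max_eq_left h, min_eq_right h]; simp

/-- The logarithm truncated to the unit ball. -/
def logLoc (y : E4) : ℝ := (Metric.closedBall (0 : E4) 1).indicator (fun z => |Real.log ‖z‖|) y

lemma logLoc_nonneg (y : E4) : 0 ≤ logLoc y := Set.indicator_nonneg (fun _ _ => abs_nonneg _) _

lemma integrable_mul_logLoc {P : E4 → ℝ} (hP : Continuous P) :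
    Integrable fun y => P y * logLoc y := by
  have h : IntegrableOn (fun y => |Real.log ‖y‖| * P y) (Metric.closedBall 0 1) :=
    IntegrableOn.mul_continuousOn (integrableOn_log_norm 1).abs hP.continuousOn
      (isCompact_closedBall _ _)
  rw [← integrable_indicator_iff Metric.isClosed_closedBall.measurableSet] at h
  refine h.congr (.of_forall fun y => ?_)
  unfold logLoc
  by_cases hy : y ∈ Metric.closedBall (0 : E4) 1
  · simp only [Set.indicator_of_mem hy]; ring
  · simp only [Set.indicator_of_notMem hy]; ring

/-- A bound of the far kernel by `log ‖x‖`, integrable in `y` against a finite mass. -/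
lemma abs_kerFar_le {x y : E4} (hx : Real.exp 1 ≤ ‖x‖) (hy : y ≠ 0) :
    |kerFar x y| ≤ (4 + logLoc y) * Real.log ‖x‖ := by
  have hx1 : 2 ≤ ‖x‖ := by have := Real.add_one_le_exp 1; linarith
  have hx0 : 0 < ‖x‖ := by linarith
  have hl : 1 ≤ Real.log ‖x‖ := by rwa [Real.le_log_iff_exp_le hx0]
  have hy0 : 0 < ‖y‖ := norm_pos_iff.2 hy
  set m := max ‖y - x‖ 1 with hm
  have hm1 : 1 ≤ m := le_max_right _ _
  have hmt : ‖y - x‖ ≤ m := le_max_left _ _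
  have hlogLoc := logLoc_nonneg y
  have up : kerFar x y ≤ 3 * Real.log ‖x‖ := by
    have h1 : ‖y‖ ≤ ‖x‖ ^ 2 * m := by
      have := norm_add_le (y - x) x
      rw [sub_add_cancel] at this
      have h2 : 1 + ‖x‖ ≤ ‖x‖ ^ 2 := by nlinarith
      nlinarith
    have h2 := Real.log_le_log hy0 h1
    rw [Real.log_mul (by positivity) (by positivity), Real.log_pow] at h2
    push_cast at h2
    unfold kerFar
    linarith
  have low : -(1 + logLoc y) ≤ kerFar x y := by
    have h1 : m ≤ 2 * (‖x‖ * max ‖y‖ 1) := by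
      have a1 : ‖y‖ ≤ max ‖y‖ 1 := le_max_left _ _
      have a2 : 1 ≤ max ‖y‖ 1 := le_max_right _ _
      have := norm_sub_le y x
      refine max_le ?_ ?_ <;> nlinarith
    have h2 := Real.log_le_log (by linarith) h1
    rw [Real.log_mul (by positivity) (by positivity),
      Real.log_mul (by positivity) (by positivity)] at h2
    have h3 : Real.log (max ‖y‖ 1) ≤ Real.log ‖y‖ + logLoc y := by
      rcases le_total ‖y‖ 1 with h | h
      · rw [max_eq_right h, Real.log_one, logLoc, Set.indicator_of_mem (by simpa using h)]
        linarith [neg_abs_le (Real.log ‖y‖)]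
      · rw [max_eq_left h]; linarith
    have h4 : Real.log 2 ≤ 1 := by have := Real.log_two_lt_d9; linarith
    unfold kerFar
    linarith
  rw [abs_le]
  constructor <;> nlinarith

/-- A bound of the far kernel which is uniform in `x`. -/
lemma abs_kerFar_le' {x : E4} (y : E4) (hx : 1 ≤ ‖x‖) :
    |kerFar x y| ≤ |Real.log ‖y‖| + Real.log (1 + ‖y‖) := by
  set m := max ‖y - x‖ 1 with hm
  have hy := norm_nonneg y
  have hm1 : 1 ≤ m := le_max_right _ _
  have hmt : ‖y - x‖ ≤ m := le_max_left _ _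
  have h1 : ‖x‖ ≤ (1 + ‖y‖) * m := by
    have := norm_sub_le y (y - x)
    rw [sub_sub_cancel] at this
    nlinarith
  have h2 : m ≤ (1 + ‖y‖) * ‖x‖ := by
    have := norm_sub_le y x
    refine max_le ?_ ?_ <;> nlinarith
  have h3 := Real.log_le_log (by linarith) h1
  have h4 := Real.log_le_log (by linarith) h2
  rw [Real.log_mul (by positivity) (by positivity)] at h3 h4
  have h5 : |Real.log ‖x‖ - Real.log m| ≤ Real.log (1 + ‖y‖) := by
    rw [abs_le]; constructor <;> linarith
  calc |kerFar x y| = |Real.log ‖y‖ + (Real.log ‖x‖ - Real.log m)| := by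
        congr 1; unfold kerFar; ring
    _ ≤ _ := (abs_add_le _ _).trans (by gcongr)

lemma kerNear_nonneg (x y : E4) : 0 ≤ kerNear x y := by
  unfold kerNear
  rw [neg_nonneg]
  exact Real.log_nonpos (le_min (norm_nonneg _) zero_le_one) (min_le_right _ _)

/-- The singularity of the near kernel is split at distance `‖x‖ ^ (-m)` from `x`: outside,
`-log ‖y - x‖ ≤ m log ‖x‖`; inside, the smallness of the ball beats the growth of `P`. -/
lemma mul_kerNear_le {P : E4 → ℝ} (h0 : ∀ y, 0 ≤ P y) {D : ℝ} {m : ℕ} (hD : 0 ≤ D)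
    (hg : ∀ y, P y ≤ D * (1 + ‖y‖) ^ m) {x y : E4} (hx : 2 ≤ ‖x‖) (hy : y ≠ x) :
    P y * kerNear x y ≤ m * Real.log ‖x‖ * (Metric.closedBall x 1).indicator P y
      + D * 2 ^ m * invSq (y - x) := by
  have hx0 : 0 < ‖x‖ := by linarith
  have hlx : 0 ≤ Real.log ‖x‖ := Real.log_nonneg (by linarith)
  by_cases ht : ‖y - x‖ ≤ 1
  · have ht0 : 0 < ‖y - x‖ := norm_pos_iff.2 (sub_ne_zero.2 hy)
    rw [Set.indicator_of_mem (by simpa [dist_eq_norm] using ht), invSq_of_le ht, kerNear,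
      min_eq_left ht]
    have hPy := h0 y
    by_cases hc : ‖y - x‖⁻¹ ≤ ‖x‖ ^ m
    · have h1 := Real.log_le_log (by positivity) hc
      rw [Real.log_inv, Real.log_pow] at h1
      have : 0 ≤ D * 2 ^ m * (‖y - x‖ ^ 2)⁻¹ := by positivity
      nlinarith
    · push Not at hc
      have h2 := Real.log_le_sub_one_of_pos (inv_pos.2 ht0)
      rw [Real.log_inv] at h2
      have h3 : P y ≤ D * (2 * ‖x‖) ^ m := by
        refine (hg y).trans ?_
        have : ‖y‖ ≤ ‖x‖ + 1 := by
          have := norm_add_le (y - x) x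
          rw [sub_add_cancel] at this
          linarith
        gcongr
        linarith
      have h4 : P y * -Real.log ‖y - x‖ ≤ D * 2 ^ m * (‖y - x‖ ^ 2)⁻¹ := by
        calc P y * -Real.log ‖y - x‖ ≤ D * (2 * ‖x‖) ^ m * ‖y - x‖⁻¹ := by
              refine mul_le_mul h3 (by linarith) ?_ (by positivity)
              rw [neg_nonneg]
              exact Real.log_nonpos ht0.le ht
          _ = D * 2 ^ m * (‖x‖ ^ m * ‖y - x‖⁻¹) := by rw [mul_pow]; ring
          _ ≤ D * 2 ^ m * (‖y - x‖⁻¹ * ‖y - x‖⁻¹) := by gcongr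
          _ = _ := by rw [← inv_pow]; ring
      have : 0 ≤ m * Real.log ‖x‖ * P y := by positivity
      linarith
  · have h1 : 0 ≤ (Metric.closedBall x 1).indicator P y := Set.indicator_nonneg (fun _ _ => h0 _) _
    have h2 := invSq_nonneg (y - x)
    rw [kerNear, min_eq_right (not_le.1 ht).le, Real.log_one, neg_zero, mul_zero]
    positivity

lemma isCountablyGenerated_cocompact_E4 : (cocompact E4).IsCountablyGenerated := by
  rw [← Metric.cobounded_eq_cocompact, ← comap_norm_atTop]
  infer_instance

lemma tendsto_log_norm : Tendsto (fun x : E4 => Real.log ‖x‖) (cocompact E4) atTop :=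
  Real.tendsto_log_atTop.comp tendsto_norm_cocompact_atTop

lemma eventually_norm_ge (r : ℝ) : ∀ᶠ x : E4 in cocompact E4, r ≤ ‖x‖ :=
  tendsto_norm_cocompact_atTop.eventually_ge_atTop r

lemma measurable_kerFar (x : E4) : Measurable (kerFar x) := by
  unfold kerFar
  have := Real.measurable_log
  fun_prop

lemma measurable_kerNear (x : E4) : Measurable (kerNear x) := by
  unfold kerNear
  have := Real.measurable_log
  fun_prop

lemma norm_mul_kerFar_le {P : E4 → ℝ} (h0 : ∀ y, 0 ≤ P y) {x y : E4} (hx : Real.exp 1 ≤ ‖x‖)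
    (hy : y ≠ 0) : ‖P y * kerFar x y‖ ≤ (4 * P y + P y * logLoc y) * Real.log ‖x‖ := by
  rw [norm_mul, Real.norm_of_nonneg (h0 y), Real.norm_eq_abs]
  calc P y * |kerFar x y| ≤ P y * ((4 + logLoc y) * Real.log ‖x‖) :=
        mul_le_mul_of_nonneg_left (abs_kerFar_le hx hy) (h0 y)
    _ = _ := by ring

lemma integrable_kerFar {P : E4 → ℝ} (hP : Continuous P) (hPi : Integrable P)
    (h0 : ∀ y, 0 ≤ P y) {x : E4} (hx : Real.exp 1 ≤ ‖x‖) :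
    Integrable fun y => P y * kerFar x y := by
  refine (((hPi.const_mul 4).add (integrable_mul_logLoc hP)).mul_const (Real.log ‖x‖)).mono'
    (hP.measurable.mul (measurable_kerFar x)).aestronglyMeasurable ?_
  filter_upwards [ae_ne 0] with y hy using norm_mul_kerFar_le h0 hx hy

lemma tendsto_kerFar {P : E4 → ℝ} (hP : Continuous P) (hPi : Integrable P)
    (h0 : ∀ y, 0 ≤ P y) :
    Tendsto (fun x => (∫ y, P y * kerFar x y) / Real.log ‖x‖) (cocompact E4) (𝓝 0) := by
  have := isCountablyGenerated_cocompact_E4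
  simp_rw [← integral_div]
  rw [show (0 : ℝ) = ∫ _y : E4, (0 : ℝ) by simp]
  refine tendsto_integral_filter_of_dominated_convergence (fun y => 4 * P y + P y * logLoc y)
    ?_ ?_ ((hPi.const_mul 4).add (integrable_mul_logLoc hP)) ?_
  · exact .of_forall fun x =>
      ((hP.measurable.mul (measurable_kerFar x)).div_const _).aestronglyMeasurable
  · filter_upwards [eventually_norm_ge (Real.exp 1)] with x hx
    have hl : 1 ≤ Real.log ‖x‖ := by
      rwa [Real.le_log_iff_exp_le ((Real.exp_pos 1).trans_le hx)]
    filter_upwards [ae_ne 0] with y hy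
    rw [norm_div, Real.norm_of_nonneg (by linarith : 0 ≤ Real.log ‖x‖), div_le_iff₀ (by linarith)]
    exact norm_mul_kerFar_le h0 hx hy
  · refine .of_forall fun y => ?_
    have h1 := (tendsto_const_nhds (x := P y * (|Real.log ‖y‖| + Real.log (1 + ‖y‖)))).div_atTop
      tendsto_log_norm
    refine squeeze_zero_norm' ?_ h1
    filter_upwards [eventually_norm_ge 1] with x hx
    have hl : 0 ≤ Real.log ‖x‖ := Real.log_nonneg hx
    rw [norm_div, norm_mul, Real.norm_of_nonneg hl, Real.norm_of_nonneg (h0 y), Real.norm_eq_abs]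
    have := h0 y
    gcongr
    exact abs_kerFar_le' y hx

lemma integrable_near_bound {P : E4 → ℝ} (hPi : Integrable P) (D : ℝ) (m : ℕ) (x : E4) :
    Integrable fun y => m * Real.log ‖x‖ * (Metric.closedBall x 1).indicator P y
      + D * 2 ^ m * invSq (y - x) :=
  ((hPi.indicator Metric.isClosed_closedBall.measurableSet).const_mul _).add
    ((integrable_invSq.comp_sub_right x).const_mul _)

lemma integrable_kerNear {P : E4 → ℝ} (hP : Continuous P) (hPi : Integrable P)
    (h0 : ∀ y, 0 ≤ P y) {D : ℝ} {m : ℕ} (hD : 0 ≤ D) (hg : ∀ y, P y ≤ D * (1 + ‖y‖) ^ m)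
    {x : E4} (hx : 2 ≤ ‖x‖) : Integrable fun y => P y * kerNear x y := by
  refine (integrable_near_bound hPi D m x).mono'
    (hP.measurable.mul (measurable_kerNear x)).aestronglyMeasurable ?_
  filter_upwards [ae_ne x] with y hy
  rw [Real.norm_of_nonneg (mul_nonneg (h0 y) (kerNear_nonneg x y))]
  exact mul_kerNear_le h0 hD hg hx hy

lemma tendsto_kerNear {P : E4 → ℝ} (hP : Continuous P) (hPi : Integrable P)
    (h0 : ∀ y, 0 ≤ P y) {D : ℝ} {m : ℕ} (hD : 0 ≤ D) (hg : ∀ y, P y ≤ D * (1 + ‖y‖) ^ m) :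
    Tendsto (fun x => (∫ y, P y * kerNear x y) / Real.log ‖x‖) (cocompact E4) (𝓝 0) := by
  have := isCountablyGenerated_cocompact_E4
  -- the mass of a unit ball escaping to infinity tends to zero
  have hmass : Tendsto (fun x => ∫ y, (Metric.closedBall x 1).indicator P y) (cocompact E4)
      (𝓝 0) := by
    rw [show (0 : ℝ) = ∫ _y : E4, (0 : ℝ) by simp]
    refine tendsto_integral_filter_of_dominated_convergence P ?_ ?_ hPi ?_
    · exact .of_forall fun x =>
        (hPi.indicator Metric.isClosed_closedBall.measurableSet).aestronglyMeasurable
    · refine .of_forall fun x => .of_forall fun y => ?_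
      refine (norm_indicator_le_norm_self P y).trans ?_
      rw [Real.norm_of_nonneg (h0 y)]
    · refine .of_forall fun y => tendsto_const_nhds.congr' ?_
      filter_upwards [eventually_norm_ge (‖y‖ + 2)] with x hx
      rw [Set.indicator_of_notMem]
      rw [mem_closedBall_iff_norm, not_le]
      have := norm_sub_norm_le x y
      rw [norm_sub_rev] at this
      linarith
  have h1 := (hmass.const_mul (m : ℝ)).add
    ((tendsto_const_nhds (x := D * 2 ^ m * ∫ y, invSq y)).div_atTop tendsto_log_norm)
  simp only [mul_zero, add_zero] at h1
  refine squeeze_zero' ?_ ?_ h1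
  · filter_upwards [eventually_norm_ge 1] with x hx
    exact div_nonneg (integral_nonneg fun y => mul_nonneg (h0 y) (kerNear_nonneg x y))
      (Real.log_nonneg hx)
  · filter_upwards [eventually_norm_ge 2] with x hx
    have hl : 0 < Real.log ‖x‖ := Real.log_pos (by linarith)
    rw [div_le_iff₀ hl, add_mul, div_mul_cancel₀ _ hl.ne']
    have h2 : ∫ y, P y * kerNear x y ≤ ∫ y, (m * Real.log ‖x‖ * (Metric.closedBall x 1).indicator P y
      + D * 2 ^ m * invSq (y - x)) := by
      refine integral_mono_ae (integrable_kerNear hP hPi h0 hD hg hx)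
        (integrable_near_bound hPi D m x) ?_
      filter_upwards [ae_ne x] with y hy using mul_kerNear_le h0 hD hg hx hy
    refine h2.trans (le_of_eq ?_)
    rw [integral_add ((hPi.indicator Metric.isClosed_closedBall.measurableSet).const_mul _)
      ((integrable_invSq.comp_sub_right x).const_mul _), integral_const_mul, integral_const_mul,
      integral_sub_right_eq_self]
    ring

/-- `log ‖y - x‖² - log ‖y‖² = 2 (log ‖x‖ - kerFar x y - kerNear x y)`, and both kernels contribute
`o(log ‖x‖)`. -/
lemma tendsto_logPot {P : E4 → ℝ} (hP : Continuous P) (hPi : Integrable P)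
    (h0 : ∀ y, 0 ≤ P y) {D : ℝ} {m : ℕ} (hD : 0 ≤ D) (hg : ∀ y, P y ≤ D * (1 + ‖y‖) ^ m) :
    Tendsto (fun x => logPot P x / Real.log ‖x‖) (cocompact E4) (𝓝 (2 * ∫ y, P y)) := by
  have h1 := ((tendsto_kerFar hP hPi h0).add (tendsto_kerNear hP hPi h0 hD hg)).const_mul 2
  have h2 := (tendsto_const_nhds (x := 2 * ∫ y, P y)).sub h1
  simp only [add_zero, mul_zero, sub_zero] at h2
  refine h2.congr' ?_
  filter_upwards [eventually_norm_ge (Real.exp 1)] with x hx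
  have hx2 : 2 ≤ ‖x‖ := by have := Real.add_one_le_exp 1; linarith
  have hl : 0 < Real.log ‖x‖ := Real.log_pos (by linarith)
  have i1 := integrable_kerFar hP hPi h0 hx
  have i2 := integrable_kerNear hP hPi h0 hD hg hx2
  have key : logPot P x = 2 * (Real.log ‖x‖ * ∫ y, P y)
      - 2 * ((∫ y, P y * kerFar x y) + ∫ y, P y * kerNear x y) := by
    have i3 : Integrable fun y => 2 * (P y * kerFar x y + P y * kerNear x y) :=
      (i1.add i2).const_mul 2
    rw [← integral_const_mul, ← integral_add i1 i2, ← integral_const_mul, ← integral_const_mul,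
      ← integral_sub ((hPi.const_mul _).const_mul _) i3]
    refine integral_congr_ae (.of_forall fun y => ?_)
    simp only
    rw [← mul_add, kerFar_add_kerNear, Real.log_pow, Real.log_pow]
    push_cast
    ring
  rw [key]
  field_simp

/-! ### A maximum principle for the half-Laplacian -/

lemma C4_nonneg : 0 ≤ C4 :=
  inv_nonneg.2 (integral_nonneg fun ζ =>
    div_nonneg (sub_nonneg.2 (Real.cos_le_one _)) (by positivity))

/-- An integrable majorant of the symmetrized half-Laplacian kernel acting on a function that is
bounded above and touched by a paraboloid. -/
def touchKer (h : E4) : ℝ := min (‖h‖ ^ 2) 1 / ‖h‖ ^ 5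

lemma touchKer_nonneg (h : E4) : 0 ≤ touchKer h := by unfold touchKer; positivity

lemma integrable_touchKer : Integrable touchKer := by
  have h := (integrable_fun_norm_addHaar (volume : Measure E4)
    (f := fun r : ℝ => min (r ^ 2) 1 / r ^ 5)).2
  refine h ?_
  simp only [finrank_euclideanSpace, Fintype.card_fin, smul_eq_mul]
  refine Integrable.mono' (integrable_inv_one_add_sq.const_mul 2).integrableOn
    (Measurable.aestronglyMeasurable (by fun_prop)) ?_
  refine (ae_restrict_mem measurableSet_Ioi).mono fun r hr => ?_
  have hr0 : 0 < r := hr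
  rw [Real.norm_of_nonneg (by positivity), ← mul_div_assoc, ← div_eq_mul_inv,
    div_le_div_iff₀ (by positivity) (by positivity)]
  rcases le_total r 1 with h1 | h1
  · have e1 : min (r ^ 2) 1 ≤ r ^ 2 := min_le_left _ _
    have e2 : 0 ≤ min (r ^ 2) 1 := by positivity
    have e3 : r ^ 2 ≤ 1 := pow_le_one₀ hr0.le h1
    calc r ^ (4 - 1) * min (r ^ 2) 1 * (1 + r ^ 2) ≤ r ^ (4 - 1) * r ^ 2 * 2 := by
          gcongr; linarith
      _ = _ := by norm_num; ring
  · have e1 : min (r ^ 2) 1 ≤ 1 := min_le_right _ _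
    have e3 : 1 ≤ r ^ 2 := one_le_pow₀ h1
    calc r ^ (4 - 1) * min (r ^ 2) 1 * (1 + r ^ 2) ≤ r ^ (4 - 1) * 1 * (r ^ 2 + r ^ 2) := by
          gcongr
      _ = _ := by norm_num; ring

/-- A principal value integral is controlled by symmetrizing the integrand about the centre. -/
lemma truncated_le {u : E4 → ℝ} {x a : E4} {M : ℝ} (hM : 0 ≤ M) (hb : ∀ y, u x - u y ≤ M)
    (hq : ∀ h, u x - u (x + h) ≤ M * (2 * inner ℝ a h + ‖h‖ ^ 2)) (ε : ℝ) :
    ∫ y in {y : E4 | ε ≤ ‖y - x‖}, (u x - u y) / ‖x - y‖ ^ 5 ≤ M * ∫ h, touchKer h := by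
  set S : Set E4 := {h : E4 | ε ≤ ‖h‖} with hS
  set G : E4 → ℝ := S.indicator fun h => (u x - u (x + h)) / ‖h‖ ^ 5 with hG
  have hSm : MeasurableSet {y : E4 | ε ≤ ‖y - x‖} :=
    measurableSet_le measurable_const (by fun_prop)
  have e : ∫ y in {y : E4 | ε ≤ ‖y - x‖}, (u x - u y) / ‖x - y‖ ^ 5 = ∫ h, G h := by
    rw [← integral_indicator hSm, ← integral_add_left_eq_self _ x]
    congr 1
    ext h
    by_cases hh : h ∈ S
    · rw [Set.indicator_of_mem (by simpa [hS] using hh), hG, Set.indicator_of_mem hh,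
        show x - (x + h) = -h by abel, norm_neg]
    · rw [Set.indicator_of_notMem (by simpa [hS] using hh), hG, Set.indicator_of_notMem hh]
  rw [e]
  have hK0 : 0 ≤ ∫ h, touchKer h := integral_nonneg touchKer_nonneg
  by_cases hi : Integrable G
  swap
  · rw [integral_undef hi]
    positivity
  have h2 : (∫ h, G h) + ∫ h, G h ≤ 2 * (M * ∫ h, touchKer h) := by
    calc (∫ h, G h) + ∫ h, G h = (∫ h, G h) + ∫ h, G (-h) := by rw [integral_neg_eq_self]
      _ = ∫ h, (G h + G (-h)) := (integral_add hi hi.comp_neg).symm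
      _ ≤ ∫ h, 2 * (M * touchKer h) := by
          refine integral_mono (hi.add hi.comp_neg)
            ((integrable_touchKer.const_mul M).const_mul 2) fun h => ?_
          by_cases hh : h ∈ S
          · have hh' : -h ∈ S := by simpa [hS] using hh
            simp only [hG, Set.indicator_of_mem hh, Set.indicator_of_mem hh', norm_neg]
            rw [← add_div, touchKer, ← mul_div_assoc, ← mul_div_assoc]
            gcongr
            have q1 := hq h
            have q2 := hq (-h)
            rw [inner_neg_right, norm_neg] at q2
            have b1 := hb (x + h)
            have b2 := hb (x + -h)
            rcases min_choice (‖h‖ ^ 2) 1 with hm | hm <;> rw [hm] <;> linarith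
          · have hh' : -h ∉ S := by simpa [hS] using hh
            simp only [hG, Set.indicator_of_notMem hh, Set.indicator_of_notMem hh']
            have := mul_nonneg hM (touchKer_nonneg h)
            linarith
      _ = _ := by rw [integral_const_mul, integral_const_mul]
  linarith

/-- If `(−Δ)^{1/2} u = φ` with `u ≥ 0`, then within distance one of any `x₀` there is a point at
which `φ` is bounded by a multiple of `u x₀ + 1`: it is the point where a paraboloid of opening
`u x₀ + 1` centred at `x₀` touches `u` from below. -/
lemma exists_near_le {u φ : E4 → ℝ} (hu : Continuous u) (hpos : ∀ x, 0 ≤ u x)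
    (heq : ∀ x, HalfLapEq4 u x (φ x)) (x₀ : E4) :
    ∃ x₁, ‖x₁ - x₀‖ ≤ 1 ∧ φ x₁ ≤ C4 * ((u x₀ + 1) * ∫ h, touchKer h) := by
  set M := u x₀ + 1 with hM
  have hM0 : 0 ≤ M := by have := hpos x₀; linarith
  obtain ⟨x₁, hx₁, hmin⟩ := (isCompact_closedBall x₀ 1).exists_isMinOn
    (f := fun y => u y + M * ‖y - x₀‖ ^ 2) ⟨x₀, by simp⟩ (by fun_prop)
  have hx0 : u x₁ + M * ‖x₁ - x₀‖ ^ 2 ≤ u x₀ := by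
    have := hmin (show x₀ ∈ Metric.closedBall x₀ 1 by simp)
    simpa using this
  have hglob : ∀ y, u x₁ + M * ‖x₁ - x₀‖ ^ 2 ≤ u y + M * ‖y - x₀‖ ^ 2 := by
    intro y
    by_cases hy : ‖y - x₀‖ ≤ 1
    · exact hmin (show y ∈ Metric.closedBall x₀ 1 from mem_closedBall_iff_norm.2 hy)
    · have h1 : 1 ≤ ‖y - x₀‖ ^ 2 := one_le_pow₀ (not_le.1 hy).le
      have := hpos y
      nlinarith
  refine ⟨x₁, mem_closedBall_iff_norm.1 hx₁, le_of_tendsto (heq x₁) (.of_forall fun ε => ?_)⟩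
  refine mul_le_mul_of_nonneg_left
    (truncated_le (a := x₁ - x₀) hM0 (fun y => ?_) (fun h => ?_) ε) C4_nonneg
  · have := hpos y
    have : 0 ≤ M * ‖x₁ - x₀‖ ^ 2 := by positivity
    linarith
  · have h1 := hglob (x₁ + h)
    rw [show x₁ + h - x₀ = (x₁ - x₀) + h by abel, norm_add_sq_real] at h1
    linarith

/-! ### The additive defect vanishes -/

lemma exists_log_lt_mul (K c : ℝ) {a : ℝ} (ha : 0 < a) (N : ℕ) :
    ∃ n : ℕ, N ≤ n ∧ 1 ≤ n ∧ c + K * Real.log n < a * n := by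
  have h1 : Tendsto (fun n : ℕ => (c + K * Real.log n) / n) atTop (𝓝 0) := by
    have h2 : Tendsto (fun x : ℝ => Real.log x / x) atTop (𝓝 0) :=
      Real.isLittleO_log_id_atTop.tendsto_div_nhds_zero
    have h3 := ((tendsto_const_nhds (x := c)).div_atTop tendsto_natCast_atTop_atTop).add
      ((h2.comp tendsto_natCast_atTop_atTop).const_mul K)
    simp only [mul_zero, add_zero] at h3
    refine h3.congr fun n => ?_
    simp only [Function.comp]
    ring
  obtain ⟨n, hn, hn1, hnN⟩ := ((h1.eventually_lt_const ha).and
    ((eventually_ge_atTop 1).and (eventually_ge_atTop N))).exists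
  refine ⟨n, hnN, hn1, ?_⟩
  have : (0 : ℝ) < n := by exact_mod_cast hn1
  rwa [div_lt_iff₀ this] at hn

/-- An additive function that differs from a continuous function by a function with logarithmic
growth is bounded on the unit ball. -/
lemma additive_bounded {v w : E4 → ℝ} (hv : Continuous v) {A : E4 →+ ℝ} {c : ℝ}
    (hvA : ∀ x, v x = w x + c + A x) {L R : ℝ} (hL : 0 ≤ L) (hR : 1 ≤ R)
    (hw : ∀ x, R ≤ ‖x‖ → |w x| ≤ L * Real.log ‖x‖) :
    ∃ B, ∀ z, ‖z‖ ≤ 1 → |A z| ≤ B := by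
  set q : E4 := EuclideanSpace.single 0 (R + 1) with hq
  have hqn : ‖q‖ = R + 1 := by
    rw [hq, PiLp.norm_single, Real.norm_of_nonneg (by linarith)]
  obtain ⟨V, hV⟩ := (isCompact_closedBall q 1).exists_bound_of_continuousOn hv.continuousOn
  refine ⟨V + |c| + L * Real.log (R + 2) + |A q|, fun z hz => ?_⟩
  have h1 : A z = v (z + q) - w (z + q) - c - A q := by rw [hvA (z + q), map_add]; ring
  have h2 : |v (z + q)| ≤ V := by simpa using hV (z + q) (by simpa using hz)
  have h3 : R ≤ ‖z + q‖ := by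
    have := norm_sub_norm_le q (-z)
    rw [norm_neg, sub_neg_eq_add, add_comm q z] at this
    linarith
  have h4 : ‖z + q‖ ≤ R + 2 := by have := norm_add_le z q; linarith
  have h5 : |w (z + q)| ≤ L * Real.log (R + 2) := by
    have h6 : Real.log ‖z + q‖ ≤ Real.log (R + 2) := Real.log_le_log (by linarith) h4
    exact (hw _ h3).trans (mul_le_mul_of_nonneg_left h6 hL)
  rw [h1]
  refine (abs_sub _ _).trans ?_
  have := abs_sub (v (z + q) - w (z + q)) c
  have := abs_sub (v (z + q)) (w (z + q))
  linarith

/-- If `A x₀ > 0`, then `exp (p v)` grows exponentially near the ray through `x₀`, which is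
incompatible with a polynomial bound at points within distance one of that ray. -/
lemma additive_nonpos {p : ℝ} (hp : 0 < p) {v w : E4 → ℝ} (hv : Continuous v) {A : E4 →+ ℝ}
    {c : ℝ} (hvA : ∀ x, v x = w x + c + A x) {L R : ℝ} (hL : 0 ≤ L) (hR : 1 ≤ R)
    (hw : ∀ x, R ≤ ‖x‖ → |w x| ≤ L * Real.log ‖x‖) {C : ℝ} {k : ℕ} (hC : 0 < C)
    (hnear : ∀ x₀, ∃ x₁, ‖x₁ - x₀‖ ≤ 1 ∧ Real.exp (p * v x₁) ≤ C * (1 + ‖x₀‖) ^ k) (x₀ : E4) :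
    A x₀ ≤ 0 := by
  obtain ⟨B, hB⟩ := additive_bounded hv hvA hL hR hw
  by_contra! ha
  have ht : 0 < ‖x₀‖ := norm_pos_iff.2 fun h => by simp [h] at ha
  set t := ‖x₀‖ with ht'
  obtain ⟨n, hnN, hn1, hn⟩ := exists_log_lt_mul (p * L + k)
    (p * B - p * c + p * L * Real.log (1 + t) + Real.log C + k * Real.log (1 + t))
    (mul_pos hp ha) ⌈(R + 1) / t⌉₊
  have hn1' : (1 : ℝ) ≤ n := by exact_mod_cast hn1
  have hRn : R + 1 ≤ n * t := by
    have := (Nat.le_ceil ((R + 1) / t)).trans (Nat.cast_le.2 hnN)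
    rwa [div_le_iff₀ ht] at this
  obtain ⟨x₁, hx₁, hexp⟩ := hnear (n • x₀)
  have hnorm : ‖n • x₀‖ = n * t := by rw [← Nat.cast_smul_eq_nsmul ℝ, norm_smul]; simp [ht']
  have hA1 : A x₁ = n * A x₀ + A (x₁ - n • x₀) := by
    rw [map_sub, map_nsmul, nsmul_eq_mul]; ring
  have hAz := (abs_le.1 (hB _ hx₁)).1
  have hup : ‖x₁‖ ≤ n * (1 + t) := by
    have := norm_add_le (x₁ - n • x₀) (n • x₀)
    rw [sub_add_cancel, hnorm] at this
    linarith
  have hlow : R ≤ ‖x₁‖ := by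
    have := norm_sub_norm_le (n • x₀) (n • x₀ - x₁)
    rw [sub_sub_cancel, hnorm, norm_sub_rev] at this
    linarith
  have hlogn : Real.log (n * (1 + t)) = Real.log n + Real.log (1 + t) :=
    Real.log_mul (by positivity) (by positivity)
  have hlog : Real.log ‖x₁‖ ≤ Real.log n + Real.log (1 + t) := by
    rw [← hlogn]
    exact Real.log_le_log (by linarith) hup
  have hw1 : -(L * (Real.log n + Real.log (1 + t))) ≤ w x₁ := by
    have := (abs_le.1 (hw x₁ hlow)).1
    have := mul_le_mul_of_nonneg_left hlog hL
    linarith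
  have hpv : p * v x₁ ≤ Real.log C + k * (Real.log n + Real.log (1 + t)) := by
    have h1 := Real.log_le_log (Real.exp_pos _) hexp
    rw [Real.log_exp, Real.log_mul hC.ne' (by positivity), Real.log_pow, hnorm] at h1
    have h2 : Real.log (1 + n * t) ≤ Real.log n + Real.log (1 + t) := by
      rw [← hlogn]
      exact Real.log_le_log (by positivity) (by linarith)
    have := mul_le_mul_of_nonneg_left h2 (Nat.cast_nonneg (α := ℝ) k)
    linarith
  have hv1 : n * A x₀ - B + c - L * (Real.log n + Real.log (1 + t)) ≤ v x₁ := by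
    rw [hvA x₁, hA1]; linarith
  have := mul_le_mul_of_nonneg_left hv1 hp.le
  linarith

/-- A solution `u` of the first equation is not identically zero. -/
lemma exists_ne_zero {u φ : E4 → ℝ} (heq : ∀ x, HalfLapEq4 u x (φ x)) (hφ : ∀ x, 0 < φ x) :
    ∃ x, u x ≠ 0 := by
  by_contra! h
  have h1 := heq 0
  simp only [HalfLapEq4, h, sub_self, zero_div, integral_zero, mul_zero] at h1
  exact (hφ 0).ne' (tendsto_nhds_unique h1 tendsto_const_nhds)

lemma logPot_eq (P : E4 → ℝ) (x : E4) :
    logPot P x = -2 * ∫ y, P y * Real.log (‖y‖ / ‖x - y‖) := by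
  rw [← integral_const_mul]
  refine integral_congr_ae ?_
  filter_upwards [ae_ne 0, ae_ne x] with y hy0 hyx
  rw [Real.log_div (norm_ne_zero_iff.2 hy0) (norm_ne_zero_iff.2 (sub_ne_zero.2 hyx.symm)),
    Real.log_pow, Real.log_pow, norm_sub_rev x y]
  push_cast
  ring

/-! ### The representation formula and its asymptotics -/

theorem stmt15 (p : ℝ) (hp : 0 < p) (u v : E4 → ℝ)
    (hsol : IsSolution4 p u v)
    (hu_nonneg : ∀ x : E4, 0 ≤ u x)
    (hmass : FiniteMass4 u)
    (hv_decay : Tendsto (fun x : E4 => v x / ‖x‖ ^ 2) (cocompact E4) (𝓝 0))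
    (hu_growth : ∃ K C R : ℝ, 0 < K ∧ 0 < C ∧ 0 < R ∧
      ∀ x : E4, R ≤ ‖x‖ → u x ≤ C * ‖x‖ ^ K)
    (α : ℝ) (hα : α = 1 / (8 * Real.pi ^ 2) * (∫ y : E4, P4 u y)) :
    (∃ γ : ℝ, ∀ x : E4, v x =
      1 / (8 * Real.pi ^ 2) * (∫ y : E4, P4 u y * Real.log (‖y‖ / ‖x - y‖)) + γ) ∧
    Tendsto (fun x : E4 => v x / Real.log ‖x‖) (cocompact E4) (𝓝 (-α)) := by
  have hcu : Continuous u := hsol.u_C1.continuous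
  have hcv : Continuous v := hsol.v_C4.continuous
  have hP : lap4 (lap4 v) = P4 u := funext hsol.eq_v
  have hPc : Continuous (P4 u) := hP ▸ continuous_bilap hsol.v_C4
  have hPi : Integrable (P4 u) := integrable_P4 hmass
  obtain ⟨A, hA⟩ := exists_additive_defect hsol.v_C4 (hP ▸ hPi) hv_decay
  rw [hP] at hA
  obtain ⟨z₀, hz₀⟩ := exists_ne_zero hsol.eq_u fun x => Real.exp_pos _
  obtain ⟨C, k, hC, hCk⟩ := poly_bound hcu hu_growth
  obtain ⟨D, m, hD, hDm⟩ := P4_growth hcu hu_nonneg hmass hz₀ hC hCk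
  have hlim := (tendsto_logPot hPc hPi (P4_nonneg u) hD hDm).const_mul (-1 / (16 * Real.pi ^ 2))
  have hαe : -1 / (16 * Real.pi ^ 2) * (2 * ∫ y, P4 u y) = -α := by
    rw [hα]; field_simp; ring
  rw [hαe] at hlim
  -- the logarithmic potential is eventually bounded by a multiple of the logarithm
  obtain ⟨R, hR, hw⟩ : ∃ R : ℝ, 1 ≤ R ∧ ∀ x : E4, R ≤ ‖x‖ →
      |-1 / (16 * Real.pi ^ 2) * logPot (P4 u) x| ≤ (|α| + 1) * Real.log ‖x‖ := by
    have h1 := hlim.abs.eventually_lt_const (show |-α| < |α| + 1 by rw [abs_neg]; linarith)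
    rw [← Metric.cobounded_eq_cocompact, ← comap_norm_atTop, eventually_comap, eventually_atTop] at h1
    obtain ⟨R, hR⟩ := h1
    refine ⟨max R 2, by norm_num, fun x hx => ?_⟩
    have hl : 0 < Real.log ‖x‖ := Real.log_pos (by linarith [(le_max_right R 2).trans hx])
    have h2 := hR ‖x‖ ((le_max_left R 2).trans hx) x rfl
    rw [← mul_div_assoc, abs_div, abs_of_pos hl, div_lt_iff₀ hl] at h2
    exact h2.le
  have hT0 : 0 ≤ ∫ h, touchKer h := integral_nonneg touchKer_nonneg
  have hnear : ∀ x₀ : E4, ∃ x₁, ‖x₁ - x₀‖ ≤ 1 ∧ Real.exp (p * v x₁)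
      ≤ (C4 * ((C + 1) * ∫ h, touchKer h) + 1) * (1 + ‖x₀‖) ^ k := by
    intro x₀
    obtain ⟨x₁, h1, h2⟩ := exists_near_le hcu hu_nonneg hsol.eq_u x₀
    refine ⟨x₁, h1, h2.trans ?_⟩
    have h3 : 1 ≤ (1 + ‖x₀‖) ^ k := one_le_pow₀ (by linarith [norm_nonneg x₀])
    have h4 : u x₀ + 1 ≤ (C + 1) * (1 + ‖x₀‖) ^ k := by linarith [hCk x₀]
    calc C4 * ((u x₀ + 1) * ∫ h, touchKer h)
        ≤ C4 * ((C + 1) * (1 + ‖x₀‖) ^ k * ∫ h, touchKer h) := by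
          gcongr
          exact C4_nonneg
      _ ≤ _ := by linarith
  have hC' : 0 < C4 * ((C + 1) * ∫ h, touchKer h) + 1 := by
    have := C4_nonneg
    positivity
  have hA0 : ∀ x, A x = 0 := by
    intro x
    have hle := additive_nonpos hp hcv hA (by positivity) hR hw hC' hnear
    have h1 := hle x
    have h2 := hle (-x)
    rw [map_neg] at h2
    linarith
  refine ⟨⟨v 0, fun x => ?_⟩, ?_⟩
  · rw [hA x, hA0, logPot_eq]
    field_simp
    ring
  · have h1 := hlim.add ((tendsto_const_nhds (x := v 0)).div_atTop tendsto_log_norm)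
    rw [add_zero] at h1
    refine h1.congr fun x => ?_
    rw [hA x, hA0]
    ring
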